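/- arXiv:2007.09591 — 3 statements merged into one kernel-verified Lean document; each statement's English description precedes it below -/
import Mathlib

section
/- There is an absolute constant C such that the following holds. Let l ∈ ℝ² with |l| = 1, λ > 0 with λl ∈ ℤ², and 10 ≤ μ ≤ λ/2. Let b₀ : 𝕋² → ℝ be smooth with Fourier support contained in {|k| ≤ μ}. Then: ‖T^{(1)}_{λl} b₀‖_∞ ≤ C λ^{−1} μ² ‖b₀‖_∞; ‖T^{(2)}_{λl} b₀‖_∞ ≤ C λ^{−2} μ³ ‖b₀‖_∞; and ‖Δ^{−1}∇ T^{(2)}_{λl} b₀‖_X ≤ C ‖b₀‖_∞ λ^{−2} μ² log μ, where the X-norm of the vector Δ^{−1}∇ T^{(2)}_{λl} b₀ is the sum of the X-norms of its two components. -/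
open MeasureTheory Complex Filter
open scoped ENNReal NNReal

noncomputable section

abbrev Z2 := ℤ × ℤ

/-- dot product of an integer frequency with a point of `ℝ²` -/
def dotZ (k : Z2) (x : ℝ × ℝ) : ℝ := (k.1 : ℝ) * x.1 + (k.2 : ℝ) * x.2

/-- Euclidean norm of an integer frequency -/
def knorm (k : Z2) : ℝ := Real.sqrt ((k.1 : ℝ) ^ 2 + (k.2 : ℝ) ^ 2)

/-- Euclidean norm on `ℝ²` (realized as `ℝ × ℝ`) -/
def e2 (x : ℝ × ℝ) : ℝ := Real.sqrt (x.1 ^ 2 + x.2 ^ 2)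

/-- the fundamental domain `[-π, π]²` of the torus -/
def Q2 : Set (ℝ × ℝ) := Set.Icc (-Real.pi, -Real.pi) (Real.pi, Real.pi)

/-- `2π`-periodicity in both variables -/
def Periodic2 (f : ℝ × ℝ → ℂ) : Prop :=
  ∀ x : ℝ × ℝ, f (x.1 + 2 * Real.pi, x.2) = f x ∧ f (x.1, x.2 + 2 * Real.pi) = f x

def RealValued (f : ℝ × ℝ → ℂ) : Prop := ∀ x, (f x).im = 0

/-- Fourier coefficient `f̂(k) = (2π)⁻² ∫_{𝕋²} f(x) e^{-ik⋅x} dx` -/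
def fCoeff (f : ℝ × ℝ → ℂ) (k : Z2) : ℂ :=
  (1 / (2 * Real.pi) ^ 2 : ℂ) * ∫ x in Q2, f x * Complex.exp (-Complex.I * (dotZ k x : ℝ))

/-- Fourier multiplier operator with symbol `m` -/
def Tmult (m : Z2 → ℂ) (f : ℝ × ℝ → ℂ) : ℝ × ℝ → ℂ :=
  fun x => ∑' k : Z2, m k * fCoeff f k * Complex.exp (Complex.I * (dotZ k x : ℝ))

/-- `Λ^s = (-Δ)^{s/2}`, the multiplier with symbol `|k|^s` (killing `k = 0` for `s ≤ 0`) -/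
def Lam (s : ℝ) : (ℝ × ℝ → ℂ) → (ℝ × ℝ → ℂ) :=
  Tmult fun k => if k = 0 then 0 else ((knorm k ^ s : ℝ) : ℂ)

/-- symbol of the Riesz transform `R_j`, `i k_j / |k|` -/
def rieszSym (j : Fin 2) (k : Z2) : ℂ :=
  if k = 0 then 0
  else Complex.I * ((if j = 0 then (k.1 : ℝ) else (k.2 : ℝ)) : ℂ) / ((knorm k : ℝ) : ℂ)

/-- the Riesz transform `R_j` -/
def Riesz (j : Fin 2) : (ℝ × ℝ → ℂ) → (ℝ × ℝ → ℂ) := Tmult (rieszSym j)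

/-- symbol of the modified Riesz-type transforms `R_j^o` of Lemma 2.2 -/
def RoSym (j : Fin 2) (k : Z2) : ℝ :=
  if k = 0 then 0
  else if j = 0 then 25 * ((k.2 : ℝ) ^ 2 - (k.1 : ℝ) ^ 2) / (12 * ((k.1 : ℝ) ^ 2 + (k.2 : ℝ) ^ 2))
  else 7 * ((k.2 : ℝ) ^ 2 - (k.1 : ℝ) ^ 2) / (12 * ((k.1 : ℝ) ^ 2 + (k.2 : ℝ) ^ 2))
      + 4 * (k.1 : ℝ) * (k.2 : ℝ) / ((k.1 : ℝ) ^ 2 + (k.2 : ℝ) ^ 2)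

/-- the Riesz-type transforms `R_j^o` -/
def Ro (j : Fin 2) : (ℝ × ℝ → ℂ) → (ℝ × ℝ → ℂ) := Tmult fun k => ((RoSym j k : ℝ) : ℂ)

/-- symbol of `Δ⁻¹` (mean annihilated) -/
def deltaInvSym (k : Z2) : ℂ := if k = 0 then 0 else -1 / ((knorm k ^ 2 : ℝ) : ℂ)

/-- directional derivative `(v ⋅ ∇) f` -/
def dirD (v : ℝ × ℝ) (f : ℝ × ℝ → ℂ) : ℝ × ℝ → ℂ := fun x => fderiv ℝ f x v

/-- partial derivative `∂_j f` -/
def pd (j : Fin 2) (f : ℝ × ℝ → ℂ) : ℝ × ℝ → ℂ :=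
  dirD (if j = 0 then ((1 : ℝ), (0 : ℝ)) else ((0 : ℝ), (1 : ℝ))) f

/-- sup norm on the torus -/
def supNorm (f : ℝ × ℝ → ℂ) : ℝ := ⨆ x : ℝ × ℝ, ‖f x‖

/-- the `X`-norm `‖q‖_X = ‖q‖_∞ + ‖R₁^o q‖_∞ + ‖R₂^o q‖_∞` -/
def Xnorm (q : ℝ × ℝ → ℂ) : ℝ := supNorm q + supNorm (Ro 0 q) + supNorm (Ro 1 q)

/-- the vectors `l₁ = (3/5, 4/5)` and `l₂ = (1,0)` -/
def l1 : ℝ × ℝ := (3 / 5, 4 / 5)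
def l2 : ℝ × ℝ := (1, 0)

/-- the rotation `l ↦ l^⊥` -/
def perp (l : ℝ × ℝ) : ℝ × ℝ := (-l.2, l.1)

/-- symbol view of frequencies as real vectors -/
def toR (k : Z2) : ℝ × ℝ := ((k.1 : ℝ), (k.2 : ℝ))

/-- the operator `T^{(1)}_{λl}` (where `κ = λl ∈ ℤ²`) -/
def T1op (κ : Z2) (lam : ℝ) : (ℝ × ℝ → ℂ) → (ℝ × ℝ → ℂ) :=
  Tmult fun k => (((knorm (κ + k) + knorm (κ - k)) / 2 - lam : ℝ) : ℂ)

/-- the operator `T^{(2)}_{λl}` (where `κ = λl ∈ ℤ²`) -/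
def T2op (κ : Z2) (l : ℝ × ℝ) : (ℝ × ℝ → ℂ) → (ℝ × ℝ → ℂ) :=
  Tmult fun k =>
    Complex.I * (((knorm (κ + k) - knorm (κ - k)) / 2 - (l.1 * (k.1 : ℝ) + l.2 * (k.2 : ℝ)) : ℝ) : ℂ)

/-- the functions `a_j = 2 √(r/den) √(C₀ + R_j^o q / r)` -/
def aPerf (q : ℝ × ℝ → ℂ) (r den C₀ : ℝ) (j : Fin 2) : ℝ × ℝ → ℂ :=
  fun x => ((2 * Real.sqrt (r / den) * Real.sqrt (C₀ + (Ro j q x).re / r) : ℝ) : ℂ)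

/-- `λ_n = ⌈λ₀^{bⁿ}⌉` -/
def lamSeq (lam0 : ℕ) (b : ℝ) (n : ℕ) : ℕ := ⌈((lam0 : ℝ)) ^ (b ^ n)⌉₊

/-- `r_n = λ_n^{-β}` -/
def rSeq (lam0 : ℕ) (b β : ℝ) (n : ℕ) : ℝ := ((lamSeq lam0 b n : ℝ)) ^ (-β)

/-- `μ_{n+1} = (λ_n λ_{n+1})^{1/2}` -/
def muSeq (lam0 : ℕ) (b : ℝ) (n : ℕ) : ℝ :=
  Real.sqrt ((lamSeq lam0 b n : ℝ) * (lamSeq lam0 b (n + 1) : ℝ))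

/-- smooth Fourier cutoff `P_{≤μ}` associated to a bump `ψ` -/
def Pcut (ψ : ℝ × ℝ → ℝ) (μ : ℝ) : (ℝ × ℝ → ℂ) → (ℝ × ℝ → ℂ) :=
  Tmult fun k => ((ψ ((k.1 : ℝ) / μ, (k.2 : ℝ) / μ) : ℝ) : ℂ)

/-- bilinear multiplier with symbol the Fourier transform of a kernel `K ∈ L¹(ℝ²×ℝ²)` -/
def mOf (K : (ℝ × ℝ) × (ℝ × ℝ) → ℂ) (ξ η : ℝ × ℝ) : ℂ :=
  ∫ z : (ℝ × ℝ) × (ℝ × ℝ),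
    K z * Complex.exp (-Complex.I * ((ξ.1 * z.1.1 + ξ.2 * z.1.2 + η.1 * z.2.1 + η.2 * z.2.2 : ℝ) : ℂ))

/-- the bilinear multiplier operator associated to a kernel `K ∈ L¹(ℝ²×ℝ²)` -/
def Tbil (K : (ℝ × ℝ) × (ℝ × ℝ) → ℂ) (f g : ℝ × ℝ → ℂ) : ℝ × ℝ → ℂ :=
  fun x => ∑' k : Z2,
    (∑' k' : Z2, mOf K (toR k') (toR (k - k')) * fCoeff f k' * fCoeff g (k - k'))
      * Complex.exp (Complex.I * (dotZ k x : ℝ))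

/-- Fourier coefficients of the commutator `[R_j, φ]θ`, computed from those of `φ` and `θ` -/
def commCoeff (j : Fin 2) (φh c : Z2 → ℂ) (k : Z2) : ℂ :=
  ∑' k' : Z2, (rieszSym j k - rieszSym j k') * φh (k - k') * c k'

def ek (k : Z2) (x : ℝ × ℝ) : ℂ := Complex.exp (Complex.I * (dotZ k x : ℝ))

/-- `m` acts on trigonometric polynomials with frequencies in `S` with sup-norm bound `c` -/
def Bd (S : Finset Z2) (m : Z2 → ℂ) (c : ℝ) : Prop :=
  ∀ (a : Z2 → ℂ) (M : ℝ), (∀ x, ‖∑ k ∈ S, a k * ek k x‖ ≤ M) →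
    ∀ x, ‖∑ k ∈ S, m k * a k * ek k x‖ ≤ c * M

/-- linear form -/
def lin (v : ℝ × ℝ) (k : Z2) : ℝ := v.1 * (k.1 : ℝ) + v.2 * (k.2 : ℝ)

lemma Bd.congr {S : Finset Z2} {m m' : Z2 → ℂ} {c : ℝ} (h : Bd S m c)
    (hm : ∀ k ∈ S, m' k = m k) : Bd S m' c := by
  intro a M ha x
  rw [Finset.sum_congr rfl (fun k hk => by rw [hm k hk])]
  exact h a M ha x

lemma Bd.mono {S : Finset Z2} {m : Z2 → ℂ} {c c' : ℝ} (h : Bd S m c) (hc : c ≤ c') :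
    Bd S m c' := by
  intro a M ha x
  have : 0 ≤ M := (norm_nonneg _).trans (ha 0)
  exact (h a M ha x).trans (mul_le_mul_of_nonneg_right hc this)

lemma Bd.mul {S : Finset Z2} {m m' : Z2 → ℂ} {c c' : ℝ} (h : Bd S m c) (h' : Bd S m' c') :
    Bd S (fun k => m k * m' k) (c * c') := by
  intro a M ha x
  have := h (fun k => m' k * a k) (c' * M) (fun x => h' a M ha x) x
  simpa [mul_assoc] using this

lemma Bd.add {S : Finset Z2} {m m' : Z2 → ℂ} {c c' : ℝ} (h : Bd S m c) (h' : Bd S m' c') :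
    Bd S (fun k => m k + m' k) (c + c') := by
  intro a M ha x
  simp only [add_mul, Finset.sum_add_distrib]
  exact (norm_add_le _ _).trans (add_le_add (h a M ha x) (h' a M ha x))

lemma Bd.const (S : Finset Z2) (z : ℂ) : Bd S (fun _ => z) ‖z‖ := by
  intro a M ha x
  simp only [mul_assoc, ← Finset.mul_sum, norm_mul]
  exact mul_le_mul_of_nonneg_left (ha x) (norm_nonneg _)

lemma Bd.smul {S : Finset Z2} {m : Z2 → ℂ} {c : ℝ} (z : ℂ) (h : Bd S m c) :
    Bd S (fun k => z * m k) (‖z‖ * c) := (Bd.const S z).mul h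

lemma Bd.pow {S : Finset Z2} {m : Z2 → ℂ} {c : ℝ} (h : Bd S m c) (n : ℕ) :
    Bd S (fun k => m k ^ n) (c ^ n) := by
  induction n with
  | zero => simpa using Bd.const S 1
  | succ n ih => simpa [pow_succ] using ih.mul h

lemma Bd.hasSum {S : Finset Z2} {m : ℕ → Z2 → ℂ} {c : ℕ → ℝ} {f : Z2 → ℂ} {C : ℝ}
    (h : ∀ n, Bd S (m n) (c n)) (hf : ∀ k ∈ S, HasSum (fun n => m n k) (f k))
    (hc : HasSum c C) : Bd S f C := by
  intro a M ha x
  have h1 : HasSum (fun n => ∑ k ∈ S, m n k * a k * ek k x) (∑ k ∈ S, f k * a k * ek k x) :=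
    hasSum_sum (fun k hk => ((hf k hk).mul_right _).mul_right _)
  have h2 := hc.mul_right M
  have h3 : Summable (fun n => ‖∑ k ∈ S, m n k * a k * ek k x‖) :=
    Summable.of_nonneg_of_le (fun _ => norm_nonneg _) (fun n => h n a M ha x) h2.summable
  rw [← h1.tsum_eq, ← h2.tsum_eq]
  exact (norm_tsum_le_tsum_norm h3).trans
    (h3.tsum_le_tsum (fun n => h n a M ha x) h2.summable)

lemma Bd.integral {S : Finset Z2} {α : Type} [MeasurableSpace α] (ν : Measure α)
    {m : α → Z2 → ℂ} {c : α → ℝ} {f : Z2 → ℂ}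
    (h : ∀ᵐ t ∂ν, Bd S (m t) (c t)) (hm : ∀ k ∈ S, Integrable (fun t => m t k) ν)
    (hf : ∀ k ∈ S, f k = ∫ t, m t k ∂ν)
    (hc : Integrable c ν) : Bd S f (∫ t, c t ∂ν) := by
  intro a M ha x
  have h1 : ∑ k ∈ S, f k * a k * ek k x = ∫ t, ∑ k ∈ S, m t k * a k * ek k x ∂ν := by
    rw [integral_finsetSum]
    · refine Finset.sum_congr rfl fun k hk => ?_
      rw [integral_mul_const, integral_mul_const, hf k hk]
    · intro k hk
      exact ((hm k hk).mul_const _).mul_const _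
  rw [h1, ← integral_mul_const]
  refine norm_integral_le_of_norm_le (hc.mul_const M) ?_
  filter_upwards [h] with t ht
  exact ht a M ha x

lemma Bd.char (S : Finset Z2) (v : ℝ × ℝ) :
    Bd S (fun k => Complex.exp (Complex.I * (lin v k : ℝ))) 1 := by
  intro a M ha x
  have := ha (x + v)
  rw [one_mul]
  refine le_of_eq_of_le (congrArg _ (Finset.sum_congr rfl fun k hk => ?_)) this
  rw [mul_comm _ (a k), mul_assoc]
  unfold ek
  rw [← Complex.exp_add]
  congr 2
  simp only [dotZ, lin, Prod.fst_add, Prod.snd_add]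
  push_cast
  ring

lemma Bd.cos (S : Finset Z2) (v : ℝ × ℝ) (φ : ℝ) :
    Bd S (fun k => ((Real.cos (lin v k + φ) : ℝ) : ℂ)) 1 := by
  have h1 := (Bd.char S v).smul (Complex.exp (Complex.I * φ) / 2)
  have h2 := (Bd.char S (-v)).smul (Complex.exp (-(Complex.I * φ)) / 2)
  refine ((h1.add h2).congr ?_).mono ?_
  · intro k hk
    have : lin (-v) k = - lin v k := by simp [lin]; ring
    rw [this]
    push_cast
    rw [Complex.cos, div_mul_eq_mul_div, div_mul_eq_mul_div, ← Complex.exp_add, ← Complex.exp_add,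
      ← add_div]
    congr 3 <;> ring_nf
  · have e1 : ‖Complex.exp (Complex.I * φ)‖ = 1 := by
      rw [mul_comm]; exact Complex.norm_exp_ofReal_mul_I φ
    have e2 : ‖Complex.exp (-(Complex.I * φ))‖ = 1 := by
      have := Complex.norm_exp_ofReal_mul_I (-φ)
      rw [← this]; congr 2; push_cast; ring
    rw [norm_div, norm_div, e1, e2]; norm_num

lemma cos_two_sum {x : ℝ} (hx : x ∈ Set.Icc (0 : ℝ) 1) :
    HasSum (fun n : ℕ => 1 / (n : ℝ) ^ 2 * Real.cos (2 * Real.pi * n * x))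
      (Real.pi ^ 2 * (x ^ 2 - x + 6⁻¹)) := by
  have := hasSum_one_div_nat_pow_mul_cos (k := 1) one_ne_zero hx
  have h2 := bernoulliFun_two x
  unfold bernoulliFun at h2
  simp only [mul_one] at this
  rw [h2] at this
  have e : Real.pi ^ 2 * (x ^ 2 - x + 6⁻¹) = (-1) ^ (1 + 1) * (2 * Real.pi) ^ 2 / 2 /
      ((Nat.factorial 2 : ℕ) : ℝ) * (x ^ 2 - x + 6⁻¹) := by
    rw [Nat.factorial_two]; push_cast; ring
  rw [e]; exact this

lemma hs_congr {f g : ℕ → ℝ} {A A' : ℝ} (h : HasSum f A) (e : ∀ n, g n = f n) (e' : A' = A) :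
    HasSum g A' := by
  rw [funext e, e']; exact h

lemma hs_odd {f : ℕ → ℝ} {A B : ℝ} (h : HasSum f A) (h' : HasSum (fun n => f (2 * n)) B) :
    HasSum (fun n => f (2 * n + 1)) (A - B) := by
  have hinj : Function.Injective (fun n : ℕ => 2 * n + 1) := fun a b h => by simpa using h
  have s3 : Summable (fun n => f (2 * n + 1)) := h.summable.comp_injective hinj
  have s5 := HasSum.even_add_odd h' s3.hasSum
  rw [← s5.unique h, add_sub_cancel_left]
  exact s3.hasSum

lemma cos_odd_sum {θ : ℝ} (h0 : 0 ≤ θ) (h1 : θ ≤ Real.pi) :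
    HasSum (fun n : ℕ => 1 / (2 * (n : ℝ) + 1) ^ 2 * Real.cos ((2 * n + 1) * θ))
      (Real.pi ^ 2 / 8 - Real.pi * θ / 4) := by
  have hp := Real.pi_pos
  have hx : θ / (2 * Real.pi) ∈ Set.Icc (0 : ℝ) 1 :=
    ⟨by positivity, by rw [div_le_one (by positivity)]; linarith⟩
  have hx2 : θ / Real.pi ∈ Set.Icc (0 : ℝ) 1 :=
    ⟨by positivity, by rw [div_le_one (by positivity)]; linarith⟩
  have s1 := cos_two_sum hx
  have s2 := (cos_two_sum hx2).mul_left (1 / 4)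
  have s3 : HasSum (fun n : ℕ => 1 / ((2 * n : ℕ) : ℝ) ^ 2 *
      Real.cos (2 * Real.pi * ((2 * n : ℕ) : ℝ) * (θ / (2 * Real.pi))))
      (1 / 4 * (Real.pi ^ 2 * ((θ / Real.pi) ^ 2 - θ / Real.pi + 6⁻¹))) := by
    refine hs_congr s2 (fun n => ?_) rfl
    push_cast
    have e : 2 * Real.pi * (2 * (n : ℝ)) * (θ / (2 * Real.pi)) = 2 * Real.pi * n * (θ / Real.pi) := by
      field_simp
    rw [e]
    ring
  have s4 := hs_odd (f := fun n : ℕ => 1 / (n : ℝ) ^ 2 *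
      Real.cos (2 * Real.pi * n * (θ / (2 * Real.pi)))) s1 s3
  refine hs_congr s4 (fun n => ?_) ?_
  · push_cast
    congr 2
    field_simp
  · field_simp
    ring

lemma lin_abs_le {v : ℝ × ℝ} (hv : v.1 ^ 2 + v.2 ^ 2 ≤ 1) (k : Z2) : |lin v k| ≤ knorm k := by
  unfold knorm lin
  apply Real.abs_le_sqrt
  nlinarith [sq_nonneg (v.1 * (k.2 : ℝ) - v.2 * (k.1 : ℝ)), sq_nonneg (k.1 : ℝ),
    sq_nonneg (k.2 : ℝ)]

/-- sharp Bernstein inequality -/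
lemma bd_lin {S : Finset Z2} {μ : ℝ} (hμ : 0 < μ) (hS : ∀ k ∈ S, knorm k ≤ μ) {v : ℝ × ℝ}
    (hv : v.1 ^ 2 + v.2 ^ 2 ≤ 1) : Bd S (fun k => ((lin v k : ℝ) : ℂ)) μ := by
  have hp := Real.pi_pos
  have hC := (cos_odd_sum le_rfl hp.le).mul_left (8 * μ / Real.pi ^ 2)
  have hC' : 8 * μ / Real.pi ^ 2 * (Real.pi ^ 2 / 8 - Real.pi * 0 / 4) = μ := by
    field_simp; ring
  rw [hC'] at hC
  refine Bd.hasSum (m := fun n k => ((8 * μ / Real.pi ^ 2 * (1 / (2 * (n : ℝ) + 1) ^ 2 *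
    Real.cos ((2 * n + 1) * (Real.pi / 2 - Real.pi * lin v k / (2 * μ)))) : ℝ) : ℂ)) ?_ ?_ hC
  · intro n
    have h1 := (Bd.cos S (-((2 * n + 1) * Real.pi / (2 * μ)) • v) ((2 * n + 1) * Real.pi / 2)).smul
      ((8 * μ / Real.pi ^ 2 * (1 / (2 * (n : ℝ) + 1) ^ 2) : ℝ) : ℂ)
    refine (h1.congr ?_).mono ?_
    · intro k hk
      rw [← Complex.ofReal_mul]
      congr 1
      rw [mul_assoc]
      congr 3
      simp [lin]
      ring
    · rw [Complex.norm_real, Real.norm_of_nonneg (by positivity)]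
      simp
  · intro k hk
    have h1 := abs_le.mp ((lin_abs_le hv k).trans (hS k hk))
    have e1 : Real.pi * lin v k / (2 * μ) = Real.pi / 2 * (lin v k / μ) := by
      field_simp
    have e2 : lin v k / μ ≤ 1 := by rw [div_le_one hμ]; exact h1.2
    have e3 : -1 ≤ lin v k / μ := by rw [le_div_iff₀ hμ]; linarith [h1.1]
    have h2 := (cos_odd_sum (θ := Real.pi / 2 - Real.pi * lin v k / (2 * μ))
      (by rw [e1]; nlinarith) (by rw [e1]; nlinarith)).mul_left (8 * μ / Real.pi ^ 2)
    have h3 : 8 * μ / Real.pi ^ 2 * (Real.pi ^ 2 / 8 - Real.pi *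
      (Real.pi / 2 - Real.pi * lin v k / (2 * μ)) / 4) = lin v k := by
      field_simp; ring
    rw [h3] at h2
    exact Complex.hasSum_ofReal.mpr h2

/-- binomial coefficients of the square root -/
def cc (n : ℕ) : ℝ := Ring.choose (1 / 2 : ℝ) n

lemma cc_succ (n : ℕ) : ((n : ℝ) + 1) * cc (n + 1) = (1 / 2 - n) * cc n := by
  unfold cc
  rw [Ring.choose_eq_smul, Ring.choose_eq_smul, descPochhammer_succ_right]
  simp only [Polynomial.smeval_mul, Polynomial.smeval_sub, Polynomial.smeval_X,
    Polynomial.smeval_natCast, Nat.factorial_succ, smul_eq_mul]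
  push_cast
  have : ((n.factorial : ℕ) : ℝ) ≠ 0 := by positivity
  field_simp
  simp
  left
  ring

lemma cc_zero : cc 0 = 1 := by simp [cc]

lemma cc_one : cc 1 = 1 / 2 := by simp [cc]

lemma cc_abs_succ (n : ℕ) : ((n : ℝ) + 2) * |cc (n + 2)| = (n + 1 / 2) * |cc (n + 1)| := by
  have h := congrArg abs (cc_succ (n + 1))
  push_cast at h
  rw [abs_mul, abs_mul, abs_of_nonneg (by positivity : (0 : ℝ) ≤ n + 1 + 1), abs_sub_comm,
    abs_of_nonneg (by linarith [Nat.cast_nonneg (α := ℝ) n] : (0 : ℝ) ≤ n + 1 - 1 / 2)] at h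
  have e : (n : ℝ) + 1 + 1 = n + 2 := by ring
  have e' : (n : ℝ) + 1 - 1 / 2 = n + 1 / 2 := by ring
  rw [e, e'] at h
  exact h

lemma cc_partial (N : ℕ) : ∑ n ∈ Finset.range N, |cc (n + 1)| = 1 - 2 * (N + 1) * |cc (N + 1)| := by
  induction N with
  | zero => simp [cc_one]
  | succ N ih =>
    rw [Finset.sum_range_succ, ih]
    have := cc_abs_succ N
    push_cast
    have e : |cc (N + 1 + 1)| = |cc (N + 2)| := rfl
    rw [e]
    linarith

lemma cc_partial_le (N : ℕ) : ∑ n ∈ Finset.range N, |cc (n + 1)| ≤ 1 := by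
  rw [cc_partial]
  have : 0 ≤ 2 * ((N : ℝ) + 1) * |cc (N + 1)| := by positivity
  linarith

lemma cc_summable : Summable (fun n => |cc (n + 1)|) :=
  summable_of_sum_range_le (fun _ => abs_nonneg _) cc_partial_le

lemma cc_tsum_le : ∑' n, |cc (n + 1)| ≤ 1 :=
  Real.tsum_le_of_sum_range_le (fun _ => abs_nonneg _) cc_partial_le

lemma cc_sqrt {w : ℝ} (hw : |w| < 1) : HasSum (fun n => cc n * w ^ n) (Real.sqrt (1 + w)) := by
  have h := (Real.one_add_rpow_hasFPowerSeriesOnBall_zero (a := 1 / 2)).hasSum (y := w) (by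
    simpa [Metric.mem_eball, edist_dist, Real.dist_eq, ENNReal.ofReal_lt_one] using hw)
  rw [Real.sqrt_eq_rpow]
  rw [zero_add] at h
  refine hs_congr h (fun n => ?_) rfl
  rw [binomialSeries_apply]
  simp [cc]

lemma sqrt_series {a b : ℝ} (hab : a ^ 2 + b ^ 2 ≤ 1 / 4) :
    HasSum (fun n => cc (n + 1) * (b ^ 2) ^ n * ((1 + a)⁻¹) ^ (2 * n + 1) * b ^ 2)
      (Real.sqrt ((1 + a) ^ 2 + b ^ 2) - 1 - a) := by
  have ha : 0 < 1 + a := by nlinarith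
  have hw : |b ^ 2 / (1 + a) ^ 2| < 1 := by
    rw [abs_of_nonneg (by positivity), div_lt_one (by positivity)]
    nlinarith
  have h1 := ((hasSum_nat_add_iff' 1).mpr (cc_sqrt hw)).mul_left (1 + a)
  have e1 : Real.sqrt ((1 + a) ^ 2 + b ^ 2) = (1 + a) * Real.sqrt (1 + b ^ 2 / (1 + a) ^ 2) := by
    rw [← Real.sqrt_sq ha.le, ← Real.sqrt_mul (by positivity), Real.sqrt_sq ha.le]
    congr 1
    field_simp
  refine hs_congr h1 (fun n => ?_) ?_
  · rw [div_pow, pow_succ (b ^ 2), ← pow_mul (1 + a), inv_pow,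
      show 2 * (n + 1) = 2 * n + 1 + 1 by ring, pow_succ (1 + a) (2 * n + 1)]
    field_simp
  · rw [e1]; simp [cc_zero]; ring

lemma Bd.norm_le {S : Finset Z2} {m : Z2 → ℂ} {c : ℝ} (h : Bd S m c) {k : Z2} (hk : k ∈ S) :
    ‖m k‖ ≤ c := by
  have e1 : ∀ x, ‖ek k x‖ = 1 := fun x => by
    unfold ek; rw [mul_comm]; exact Complex.norm_exp_ofReal_mul_I _
  have := h (fun j => if j = k then 1 else 0) 1 (fun x => by
    simp [Finset.sum_ite_eq', hk, e1]) 0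
  simpa [Finset.sum_ite_eq', hk, e1] using this

lemma Bd.nonneg {S : Finset Z2} {m : Z2 → ℂ} {c : ℝ} (h : Bd S m c) {k : Z2} (hk : k ∈ S) :
    0 ≤ c := (norm_nonneg _).trans (h.norm_le hk)

lemma Bd.summable {S : Finset Z2} {m : ℕ → Z2 → ℂ} {c : ℕ → ℝ}
    (h : ∀ n, Bd S (m n) (c n)) (hc : Summable c) {k : Z2} (hk : k ∈ S) :
    Summable (fun n => m n k) :=
  Summable.of_norm_bounded hc (fun n => (h n).norm_le hk)

lemma Bd.tsum {S : Finset Z2} {m : ℕ → Z2 → ℂ} {c : ℕ → ℝ} {C : ℝ}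
    (h : ∀ n, Bd S (m n) (c n)) (hc : HasSum c C) :
    Bd S (fun k => ∑' n, m n k) C :=
  Bd.hasSum h (fun _ hk => (Bd.summable h hc.summable hk).hasSum) hc

lemma Bd.neg {S : Finset Z2} {m : Z2 → ℂ} {c : ℝ} (h : Bd S m c) :
    Bd S (fun k => - m k) c := by
  have := h.smul (-1)
  simpa using this

lemma choose_half (j : ℕ) :
    HasSum (fun p : ℕ => ((p + j).choose j : ℝ) * (1 / 2) ^ p) (2 ^ (j + 1)) := by
  have h := hasSum_choose_mul_geometric_of_norm_lt_one (𝕜 := ℝ) j (r := 1 / 2) (by norm_num)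
  have e : (1 : ℝ) / (1 - 1 / 2) ^ (j + 1) = 2 ^ (j + 1) := by
    rw [one_div, ← inv_pow]; norm_num
  rw [e] at h
  exact h

lemma bd_inv {S : Finset Z2} {a : Z2 → ℝ} (ha : Bd S (fun k => (a k : ℂ)) (1 / 2)) (j : ℕ) :
    Bd S (fun k => ((((1 + a k)⁻¹) ^ (j + 1) : ℝ) : ℂ)) (2 ^ (j + 1)) := by
  refine Bd.hasSum (m := fun p k => ((p + j).choose j : ℂ) * (-(a k : ℂ)) ^ p) ?_ ?_ (choose_half j)
  · intro p
    have := (ha.neg.pow p).smul ((p + j).choose j : ℂ)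
    rwa [Complex.norm_natCast] at this
  · intro k hk
    have h1 := ha.norm_le hk
    have h := hasSum_choose_mul_geometric_of_norm_lt_one (𝕜 := ℂ) j (r := -(a k : ℂ))
      (by rw [norm_neg]; linarith)
    have e : ((((1 + a k)⁻¹) ^ (j + 1) : ℝ) : ℂ) = 1 / (1 - -(a k : ℂ)) ^ (j + 1) := by
      push_cast
      rw [sub_neg_eq_add, inv_pow, one_div]
    rw [e]
    exact h

/-- quotient of the odd part by `a` -/
def Kq (a : Z2 → ℝ) (j : ℕ) (k : Z2) : ℂ :=
  ∑' p : ℕ, ((p + j).choose j : ℂ) * ((-1) ^ p - 1) * (a k : ℂ) ^ (p - 1)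

lemma bd_Kq_aux {S : Finset Z2} {a : Z2 → ℝ} (ha : Bd S (fun k => (a k : ℂ)) (1 / 2)) (j p : ℕ) :
    Bd S (fun k => ((p + j).choose j : ℂ) * ((-1) ^ p - 1) * (a k : ℂ) ^ (p - 1))
      (4 * (((p + j).choose j : ℝ) * (1 / 2) ^ p)) := by
  rcases p with _ | p
  · refine ((Bd.const S 0).congr (by simp)).mono ?_
    simp
  · refine ((ha.pow p).smul (((p + 1 + j).choose j : ℂ) * ((-1) ^ (p + 1) - 1))).mono ?_
    rw [norm_mul, Complex.norm_natCast]
    have h2 : ‖((-1 : ℂ) ^ (p + 1) - 1)‖ ≤ 2 := by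
      refine (norm_sub_le _ _).trans ?_
      simp; norm_num
    calc _ ≤ (((p + 1 + j).choose j : ℝ) * 2) * (1 / 2) ^ p := by gcongr
      _ = _ := by rw [pow_succ]; ring

lemma bd_Kq {S : Finset Z2} {a : Z2 → ℝ} (ha : Bd S (fun k => (a k : ℂ)) (1 / 2)) (j : ℕ) :
    Bd S (Kq a j) (4 * 2 ^ (j + 1)) :=
  Bd.tsum (bd_Kq_aux ha j) ((choose_half j).mul_left 4)

lemma Kq_eq {S : Finset Z2} {a : Z2 → ℝ} (ha : Bd S (fun k => (a k : ℂ)) (1 / 2)) (j : ℕ)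
    {k : Z2} (hk : k ∈ S) :
    (a k : ℂ) * Kq a j k =
      ((((1 + a k)⁻¹) ^ (j + 1) : ℝ) : ℂ) - ((((1 - a k)⁻¹) ^ (j + 1) : ℝ) : ℂ) := by
  have h1 := ha.norm_le hk
  have hm := hasSum_choose_mul_geometric_of_norm_lt_one (𝕜 := ℂ) j (r := -(a k : ℂ))
      (by rw [norm_neg]; linarith)
  have hp := hasSum_choose_mul_geometric_of_norm_lt_one (𝕜 := ℂ) j (r := (a k : ℂ))
      (by linarith)
  have hK := (Bd.summable (bd_Kq_aux ha j) ((choose_half j).mul_left 4).summable hk).hasSum.mul_left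
    (a k : ℂ)
  have hd := hm.sub hp
  have e : (fun p : ℕ => (a k : ℂ) *
      (((p + j).choose j : ℂ) * ((-1) ^ p - 1) * (a k : ℂ) ^ (p - 1))) =
      fun p : ℕ => ((p + j).choose j : ℂ) * (-(a k : ℂ)) ^ p
        - ((p + j).choose j : ℂ) * (a k : ℂ) ^ p := by
    funext p
    rcases p with _ | p
    · simp
    · rw [neg_pow, Nat.add_sub_cancel]; ring
  rw [e] at hK
  have := hK.unique hd
  unfold Kq
  rw [this]
  push_cast
  rw [sub_neg_eq_add, inv_pow, one_div, inv_pow, one_div]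

lemma bd_G {S : Finset Z2} {a b : Z2 → ℝ} {ε : ℝ} (ha : Bd S (fun k => (a k : ℂ)) (1 / 2))
    (hb : Bd S (fun k => (b k : ℂ)) (1 / 2)) (hb' : Bd S (fun k => (b k : ℂ)) ε)
    (hab : ∀ k ∈ S, a k ^ 2 + b k ^ 2 ≤ 1 / 4) :
    Bd S (fun k => ((Real.sqrt ((1 + a k) ^ 2 + b k ^ 2) - 1 - a k : ℝ) : ℂ)) (2 * ε ^ 2) := by
  have hc := (cc_summable.hasSum).mul_right (2 * ε ^ 2)
  refine (Bd.hasSum (m := fun n k => ((cc (n + 1) * (b k ^ 2) ^ n * ((1 + a k)⁻¹) ^ (2 * n + 1)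
    * b k ^ 2 : ℝ) : ℂ)) ?_ ?_ hc).mono ?_
  · intro n
    have h := ((((hb.pow 2).pow n).smul (cc (n + 1) : ℂ)).mul (bd_inv ha (2 * n))).mul (hb'.pow 2)
    refine (h.congr fun k hk => by push_cast; ring).mono (le_of_eq ?_)
    rw [Complex.norm_real, Real.norm_eq_abs]
    have e : ((1 / 2 : ℝ) ^ 2) ^ n * 2 ^ (2 * n + 1) = 2 := by
      rw [pow_succ (2 : ℝ) (2 * n), pow_mul (2 : ℝ), ← mul_assoc, ← mul_pow]; norm_num
    linear_combination |cc (n + 1)| * ε ^ 2 * e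
  · intro k hk
    exact Complex.hasSum_ofReal.mpr (sqrt_series (hab k hk))
  · have := cc_tsum_le
    nlinarith [sq_nonneg ε]

lemma bd_R {S : Finset Z2} {a b : Z2 → ℝ} (ha : Bd S (fun k => (a k : ℂ)) (1 / 2))
    (hb : Bd S (fun k => (b k : ℂ)) (1 / 2))
    (hab : ∀ k ∈ S, a k ^ 2 + b k ^ 2 ≤ 1 / 4) :
    ∃ R : Z2 → ℂ, Bd S R 4 ∧ ∀ k ∈ S,
      (((Real.sqrt ((1 + a k) ^ 2 + b k ^ 2) - Real.sqrt ((1 - a k) ^ 2 + b k ^ 2)) / 2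
        - a k : ℝ) : ℂ) = a k * b k ^ 2 * R k := by
  have hc := (cc_summable.hasSum).mul_right (4 : ℝ)
  have hB : ∀ n : ℕ, Bd S (fun k => (cc (n + 1) : ℂ) * ((b k : ℂ) ^ 2) ^ n * (Kq a (2 * n) k / 2))
      (|cc (n + 1)| * 4) := by
    intro n
    have h := (((hb.pow 2).pow n).smul (cc (n + 1) : ℂ)).mul ((bd_Kq ha (2 * n)).smul (1 / 2))
    refine (h.congr fun k hk => by ring).mono (le_of_eq ?_)
    rw [Complex.norm_real, Real.norm_eq_abs]
    have e : ((1 / 2 : ℝ) ^ 2) ^ n * 2 ^ (2 * n + 1) = 2 := by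
      rw [pow_succ (2 : ℝ) (2 * n), pow_mul (2 : ℝ), ← mul_assoc, ← mul_pow]; norm_num
    norm_num at e ⊢
    linear_combination 2 * |cc (n + 1)| * e
  refine ⟨_, (Bd.tsum hB hc).mono ?_, ?_⟩
  · have := cc_tsum_le
    linarith
  · intro k hk
    have h1 := sqrt_series (hab k hk)
    have h2 := sqrt_series (a := - a k) (b := b k) (by simpa using hab k hk)
    have h3 := Complex.hasSum_ofReal.mpr ((h1.sub h2).mul_left (1 / 2))
    have h4 := ((Bd.summable hB hc.summable hk).hasSum).mul_left ((a k : ℂ) * b k ^ 2)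
    have e : (fun n : ℕ => (a k : ℂ) * b k ^ 2 *
      ((cc (n + 1) : ℂ) * ((b k : ℂ) ^ 2) ^ n * (Kq a (2 * n) k / 2))) = fun n : ℕ =>
        ((1 / 2 * (cc (n + 1) * (b k ^ 2) ^ n * ((1 + a k)⁻¹) ^ (2 * n + 1) * b k ^ 2
          - cc (n + 1) * (b k ^ 2) ^ n * ((1 + -a k)⁻¹) ^ (2 * n + 1) * b k ^ 2) : ℝ) : ℂ) := by
      funext n
      have := Kq_eq ha (2 * n) hk
      rw [← sub_eq_add_neg]
      push_cast at this ⊢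
      linear_combination (cc (n + 1) : ℂ) * ((b k : ℂ) ^ 2) ^ n * b k ^ 2 / 2 * this
    rw [e] at h4
    have h5 := h4.unique h3
    rw [h5, ← sub_eq_add_neg]
    congr 1
    ring

/-- Gaussian wave -/
def gw (s x : ℝ) : ℂ := Complex.exp (Complex.I * (s * x : ℝ)) * ((Real.exp (-(1 / 4) * x ^ 2) : ℝ) : ℂ)

lemma gw_norm (s x : ℝ) : ‖gw s x‖ = Real.exp (-(1 / 4) * x ^ 2) := by
  unfold gw
  rw [norm_mul, mul_comm I, Complex.norm_exp_ofReal_mul_I, one_mul, Complex.norm_real,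
    Real.norm_of_nonneg (Real.exp_pos _).le]

lemma gw_cont (s : ℝ) : Continuous (gw s) := by
  unfold gw
  fun_prop

lemma gw_int (s : ℝ) : Integrable (gw s) := by
  refine (integrable_exp_neg_mul_sq (b := 1 / 4) (by norm_num)).mono'
    (gw_cont s).aestronglyMeasurable (ae_of_all _ fun x => ?_)
  rw [gw_norm]

lemma xgw_int (s : ℝ) : Integrable (fun x : ℝ => (x : ℂ) * gw s x) := by
  refine ((integrable_mul_exp_neg_mul_sq (b := 1 / 4) (by norm_num)).norm).mono'
    (by have := gw_cont s; exact (by fun_prop : Continuous _).aestronglyMeasurable)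
    (ae_of_all _ fun x => ?_)
  rw [norm_mul, gw_norm, Complex.norm_real, norm_mul,
    Real.norm_of_nonneg (Real.exp_pos (-(1 / 4) * x ^ 2)).le]

lemma gw_deriv (s x : ℝ) :
    HasDerivAt (gw s) (Complex.I * s * gw s x - 1 / 2 * ((x : ℂ) * gw s x)) x := by
  have h1 : HasDerivAt (fun x : ℝ => Complex.I * ((s * x : ℝ) : ℂ)) (Complex.I * s) x := by
    have : HasDerivAt (fun x : ℝ => s * x) s x := by simpa using (hasDerivAt_id x).const_mul s
    exact this.ofReal_comp.const_mul Complex.I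
  have h2 : HasDerivAt (fun x : ℝ => Real.exp (-(1 / 4) * x ^ 2))
      (Real.exp (-(1 / 4) * x ^ 2) * (-(1 / 4) * (2 * x))) x := by
    have : HasDerivAt (fun x : ℝ => -(1 / 4) * x ^ 2) (-(1 / 4) * (2 * x)) x := by
      exact ((hasDerivAt_pow 2 x).const_mul (-(1 / 4 : ℝ))).congr_deriv (by simp)
    exact this.exp
  have h3 := h1.cexp.mul h2.ofReal_comp
  refine h3.congr_deriv ?_
  unfold gw
  push_cast
  ring

lemma gw_parts (s : ℝ) : (s : ℂ) * ∫ x, gw s x = -Complex.I / 2 * ∫ x : ℝ, (x : ℂ) * gw s x := by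
  have h := integral_eq_zero_of_hasDerivAt_of_integrable (gw_deriv s)
    (((gw_int s).const_mul _).sub ((xgw_int s).const_mul _)) (gw_int s)
  rw [integral_sub ((gw_int s).const_mul _) ((xgw_int s).const_mul _), integral_const_mul,
    integral_const_mul] at h
  linear_combination (-Complex.I) * h + (s : ℂ) * (∫ x, gw s x) * Complex.I_mul_I

lemma gw_integral (s : ℝ) : ∫ x, gw s x =
    ((Real.pi / (1 / 4 : ℝ) : ℂ) ^ (1 / 2 : ℂ)) * ((Real.exp (-s ^ 2) : ℝ) : ℂ) := by
  have h := fourierIntegral_gaussian (b := (1 / 4 : ℝ)) (by norm_num) (s : ℂ)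
  have e : (fun x : ℝ => Complex.exp (Complex.I * s * x) *
      Complex.exp (-((1 / 4 : ℝ) : ℂ) * (x : ℂ) ^ 2)) = gw s := by
    funext x
    unfold gw
    push_cast
    congr 2
    ring
  rw [e] at h
  rw [h]
  push_cast
  congr 2
  ring

lemma bd_gauss : ∃ C : ℝ, 0 ≤ C ∧ ∀ (S : Finset Z2) (v : ℝ × ℝ),
    Bd S (fun k => ((Real.exp (-(lin v k) ^ 2) : ℝ) : ℂ)) C ∧
    Bd S (fun k => ((lin v k * Real.exp (-(lin v k) ^ 2) : ℝ) : ℂ)) C := by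
  set P : ℂ := (Real.pi / (1 / 4 : ℝ) : ℂ) ^ (1 / 2 : ℂ) with hP
  have hP0 : P ≠ 0 := by
    rw [hP, Complex.cpow_ne_zero_iff]
    left
    have := Real.pi_ne_zero
    simp [this]
  have key : ∀ (S : Finset Z2) (v : ℝ × ℝ),
      Bd S (fun k => ∫ x, gw (lin v k) x) (∫ x : ℝ, Real.exp (-(1 / 4) * x ^ 2)) ∧
      Bd S (fun k => ∫ x : ℝ, (x : ℂ) * gw (lin v k) x)
        (∫ x : ℝ, ‖x * Real.exp (-(1 / 4) * x ^ 2)‖) := by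
    intro S v
    have hg : ∀ x : ℝ, Bd S (fun k => gw (lin v k) x) (Real.exp (-(1 / 4) * x ^ 2)) := by
      intro x
      have h := (Bd.char S (x • v)).smul ((Real.exp (-(1 / 4) * x ^ 2) : ℝ) : ℂ)
      refine (h.congr fun k _ => ?_).mono ?_
      · unfold gw
        rw [mul_comm]
        congr 4
        simp [lin]
        ring
      · rw [Complex.norm_real, Real.norm_of_nonneg (Real.exp_pos _).le, mul_one]
    constructor
    · exact Bd.integral volume (ae_of_all _ hg) (fun k _ => gw_int _) (fun k _ => rfl)
        (integrable_exp_neg_mul_sq (by norm_num))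
    · refine Bd.integral volume (ae_of_all _ fun x => ?_) (fun k _ => xgw_int _) (fun k _ => rfl)
        (integrable_mul_exp_neg_mul_sq (by norm_num)).norm
      refine ((hg x).smul (x : ℂ)).mono ?_
      rw [norm_mul, Complex.norm_real, Real.norm_of_nonneg (Real.exp_pos (-(1 / 4) * x ^ 2)).le]
  have n1 : 0 ≤ ∫ x : ℝ, Real.exp (-(1 / 4) * x ^ 2) := integral_nonneg fun x => (Real.exp_pos _).le
  have n2 : 0 ≤ ∫ x : ℝ, ‖x * Real.exp (-(1 / 4) * x ^ 2)‖ := integral_nonneg fun x => norm_nonneg _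
  refine ⟨‖P⁻¹‖ * (∫ x : ℝ, Real.exp (-(1 / 4) * x ^ 2)) +
    ‖P⁻¹ * (-Complex.I / 2)‖ * ∫ x : ℝ, ‖x * Real.exp (-(1 / 4) * x ^ 2)‖, by positivity, ?_⟩
  intro S v
  constructor
  · refine (((key S v).1.smul P⁻¹).congr fun k _ => ?_).mono
      (le_add_of_nonneg_right (by positivity))
    rw [gw_integral, ← hP, inv_mul_cancel_left₀ hP0]
  · refine (((key S v).2.smul (P⁻¹ * (-Complex.I / 2))).congr fun k _ => ?_).mono
      (le_add_of_nonneg_left (by positivity))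
    rw [mul_assoc, ← gw_parts, gw_integral, ← hP, mul_left_comm, inv_mul_cancel_left₀ hP0]
    push_cast
    rfl

/-- squared length -/
def ksq (k : Z2) : ℝ := (k.1 : ℝ) ^ 2 + (k.2 : ℝ) ^ 2

lemma bd_heat : ∃ C : ℝ, 0 ≤ C ∧ ∀ (S : Finset Z2) (t : ℝ), 0 < t →
    Bd S (fun k => ((Real.exp (-t * ksq k) : ℝ) : ℂ)) C ∧
    ∀ v : ℝ × ℝ, v.1 ^ 2 + v.2 ^ 2 ≤ 1 →
    Bd S (fun k => ((lin v k * Real.exp (-t * ksq k) : ℝ) : ℂ)) (C / Real.sqrt t) := by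
  obtain ⟨C, hC, h⟩ := bd_gauss
  refine ⟨2 * (C * C), by positivity, fun S t ht => ?_⟩
  have hs : 0 < Real.sqrt t := Real.sqrt_pos.mpr ht
  have hst := Real.sq_sqrt ht.le
  obtain ⟨a1, b1⟩ := h S (Real.sqrt t, 0)
  obtain ⟨a2, b2⟩ := h S (0, Real.sqrt t)
  have e1 : ∀ k, lin (Real.sqrt t, 0) k = Real.sqrt t * k.1 := fun k => by simp [lin]
  have e2 : ∀ k, lin (0, Real.sqrt t) k = Real.sqrt t * k.2 := fun k => by simp [lin]
  have e3 : ∀ k : Z2, Real.exp (-t * ksq k) = Real.exp (-(Real.sqrt t * k.1) ^ 2) *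
      Real.exp (-(Real.sqrt t * k.2) ^ 2) := fun k => by
    rw [← Real.exp_add]
    congr 1
    rw [mul_pow, mul_pow, hst, ksq]
    ring
  simp only [e1, e2] at a1 b1 a2 b2
  constructor
  · refine ((a1.mul a2).congr fun k _ => ?_).mono (by nlinarith [mul_nonneg hC hC])
    rw [e3]; push_cast; rfl
  · intro v hv
    have c1 := (b1.mul a2).smul ((v.1 / Real.sqrt t : ℝ) : ℂ)
    have c2 := (a1.mul b2).smul ((v.2 / Real.sqrt t : ℝ) : ℂ)
    refine ((c1.add c2).congr fun k _ => ?_).mono ?_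
    · rw [e3]
      unfold lin
      push_cast
      have : (Real.sqrt t : ℂ) ≠ 0 := by exact_mod_cast hs.ne'
      field_simp
    · have v1 : |v.1| ≤ 1 := by rw [← sq_le_one_iff_abs_le_one]; nlinarith [sq_nonneg v.2]
      have v2 : |v.2| ≤ 1 := by rw [← sq_le_one_iff_abs_le_one]; nlinarith [sq_nonneg v.1]
      simp only [Complex.norm_real, norm_div, Real.norm_eq_abs]
      rw [abs_of_pos hs, ← add_mul, ← add_div, div_mul_eq_mul_div]
      gcongr
      linarith

lemma Bd.prod {S : Finset Z2} {n : ℕ} {m : Fin n → Z2 → ℂ} {c : ℝ} (h : ∀ i, Bd S (m i) c) :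
    Bd S (fun k => ∏ i, m i k) (c ^ n) := by
  induction n with
  | zero => simpa using Bd.const S 1
  | succ n ih =>
    simp only [Fin.prod_univ_succ, pow_succ']
    exact (h 0).mul (ih fun i => h i.succ)

lemma heat_integral {q : ℝ} (hq : 0 < q) :
    ∫ t in Set.Ioi (0 : ℝ), t * Real.exp (-t * q) = 1 / q ^ 2 := by
  have h := Real.integral_rpow_mul_exp_neg_mul_Ioi (a := 2) (r := q) (by norm_num) hq
  rw [Real.Gamma_two, mul_one] at h
  have e : (1 / q) ^ (2 : ℝ) = 1 / q ^ 2 := by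
    rw [Real.rpow_two, div_pow, one_pow]
  rw [e] at h
  rw [← h]
  refine setIntegral_congr_fun measurableSet_Ioi fun t _ => ?_
  have : (2 : ℝ) - 1 = 1 := by norm_num
  simp only [this, Real.rpow_one]
  congr 2
  ring

lemma heat_integrable {q : ℝ} (hq : 0 < q) :
    IntegrableOn (fun t : ℝ => t * Real.exp (-t * q)) (Set.Ioi 0) := by
  by_contra hn
  have h := heat_integral hq
  rw [integral_undef hn] at h
  have : 0 < 1 / q ^ 2 := by positivity
  linarith

lemma ksq_pos {k : Z2} (hk : k ≠ 0) : 0 < ksq k := by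
  unfold ksq
  rcases k with ⟨a, b⟩
  have : a ≠ 0 ∨ b ≠ 0 := by
    by_contra! h
    exact hk (by rw [h.1, h.2]; rfl)
  rcases this with h | h
  · have : (a : ℝ) ≠ 0 := by exact_mod_cast h
    positivity
  · have : (b : ℝ) ≠ 0 := by exact_mod_cast h
    positivity

lemma bd_six : ∃ C : ℝ, 0 ≤ C ∧ ∀ (S : Finset Z2) (μ : ℝ) (v : Fin 6 → ℝ × ℝ), 0 < μ →
    (∀ k ∈ S, knorm k ≤ μ) → (∀ i, (v i).1 ^ 2 + (v i).2 ^ 2 ≤ 1) →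
    Bd S (fun k => (((∏ i, lin (v i) k) / ksq k ^ 2 : ℝ) : ℂ)) (C * μ ^ 2) := by
  obtain ⟨D, hD, h⟩ := bd_heat
  refine ⟨D + D ^ 6 * 216, by positivity, ?_⟩
  intro S μ v hμ hS hv
  set m : ℝ → Z2 → ℂ := fun t k => (((∏ i, lin (v i) k) * (t * Real.exp (-t * ksq k)) : ℝ) : ℂ)
    with hm
  set T : ℝ := (μ ^ 2)⁻¹ with hT
  have hT0 : 0 < T := by positivity
  have z : ∀ i, lin (v i) 0 = 0 := fun i => by simp [lin]
  have hmi : ∀ k, IntegrableOn (fun t => m t k) (Set.Ioi 0) := by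
    intro k
    by_cases hk : k = 0
    · subst hk
      simp [hm, Fin.prod_univ_succ, z]
    · exact ((heat_integrable (ksq_pos hk)).const_mul _).ofReal
  have hmv : ∀ k, (((∏ i, lin (v i) k) / ksq k ^ 2 : ℝ) : ℂ) = ∫ t in Set.Ioi (0 : ℝ), m t k := by
    intro k
    by_cases hk : k = 0
    · subst hk
      simp [hm, Fin.prod_univ_succ, z]
    · simp only [hm]
      rw [integral_complex_ofReal, integral_const_mul, heat_integral (ksq_pos hk), mul_one_div]
  have hb1 : Bd S (fun k => ∫ t in Set.Ioc 0 T, m t k)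
      (∫ t in Set.Ioc 0 T, μ ^ 6 * (T * D)) := by
    refine Bd.integral _ ?_ (fun k _ => (hmi k).mono_set Set.Ioc_subset_Ioi_self) (fun k _ => rfl)
      (integrableOn_const (by simp))
    refine (ae_restrict_iff' measurableSet_Ioc).mpr (ae_of_all _ fun t ht => ?_)
    have p := (Bd.prod (fun i => bd_lin hμ hS (hv i))).mul ((h S t ht.1).1.smul (t : ℂ))
    refine (p.congr fun k _ => ?_).mono ?_
    · simp only [hm]; push_cast; rfl
    · rw [Complex.norm_real, Real.norm_of_nonneg ht.1.le]
      gcongr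
      exact ht.2
  have hb2 : Bd S (fun k => ∫ t in Set.Ioi T, m t k)
      (∫ t in Set.Ioi T, D ^ 6 * 216 * t ^ (-2 : ℝ)) := by
    refine Bd.integral _ ?_ (fun k _ => (hmi k).mono_set (Set.Ioi_subset_Ioi hT0.le))
      (fun k _ => rfl) ((integrableOn_Ioi_rpow_of_lt (by norm_num) hT0).const_mul _)
    refine (ae_restrict_iff' measurableSet_Ioi).mpr (ae_of_all _ fun t ht => ?_)
    have ht0 : 0 < t := hT0.trans ht
    have ht6 : 0 < t / 6 := by positivity
    have p := (Bd.prod (fun i => (h S (t / 6) ht6).2 (v i) (hv i))).smul (t : ℂ)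
    refine (p.congr fun k _ => ?_).mono (le_of_eq ?_)
    · simp only [hm]
      rw [← Complex.ofReal_prod, ← Complex.ofReal_mul]
      congr 1
      rw [Finset.prod_mul_distrib, Finset.prod_const, ← Real.exp_nat_mul]
      simp only [Finset.card_univ, Fintype.card_fin]
      have : ((6 : ℕ) : ℝ) * (-(t / 6) * ksq k) = -t * ksq k := by push_cast; ring
      rw [this]
      ring
    · rw [Complex.norm_real, Real.norm_of_nonneg ht0.le, div_pow,
        show Real.sqrt (t / 6) ^ 6 = (Real.sqrt (t / 6) ^ 2) ^ 3 by ring, Real.sq_sqrt ht6.le,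
        Real.rpow_neg ht0.le, Real.rpow_two]
      field_simp
      norm_num
  refine ((hb1.add hb2).congr fun k _ => ?_).mono (le_of_eq ?_)
  · rw [hmv, ← setIntegral_union (Set.Ioc_disjoint_Ioi le_rfl) measurableSet_Ioi
      ((hmi k).mono_set Set.Ioc_subset_Ioi_self) ((hmi k).mono_set (Set.Ioi_subset_Ioi hT0.le)),
      Set.Ioc_union_Ioi_eq_Ioi hT0.le]
  · rw [integral_const_mul (D ^ 6 * 216) (fun t : ℝ => t ^ (-2 : ℝ)), integral_Ioi_rpow_of_lt (by norm_num) hT0]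
    have e : T ^ ((-2 : ℝ) + 1) = μ ^ 2 := by
      rw [show (-2 : ℝ) + 1 = -1 by norm_num, Real.rpow_neg_one, hT, inv_inv]
    rw [e]
    simp [hT0.le]
    rw [hT]
    field_simp
    ring

lemma Q2_eq : Q2 = Set.Icc (-Real.pi) Real.pi ×ˢ Set.Icc (-Real.pi) Real.pi := by
  unfold Q2
  rw [Set.Icc_prod_Icc]

lemma pi_le : -Real.pi ≤ Real.pi := by have := Real.pi_pos; linarith

lemma exp_int_one (n : ℤ) : ∫ x in Set.Icc (-Real.pi) Real.pi,
    Complex.exp (Complex.I * ((n * x : ℝ) : ℂ)) = if n = 0 then (2 * Real.pi : ℂ) else 0 := by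
  rw [integral_Icc_eq_integral_Ioc, ← intervalIntegral.integral_of_le pi_le]
  split_ifs with h
  · subst h
    simp
    ring
  · have hn : Complex.I * (n : ℂ) ≠ 0 := mul_ne_zero Complex.I_ne_zero (by exact_mod_cast h)
    have e : ∀ x : ℝ, Complex.I * ((n * x : ℝ) : ℂ) = Complex.I * (n : ℂ) * x := fun x => by
      push_cast; ring
    simp only [e]
    rw [integral_exp_mul_complex hn]
    have : Complex.exp (Complex.I * n * (Real.pi : ℝ)) =
        Complex.exp (Complex.I * n * ((-Real.pi : ℝ) : ℂ)) := by
      rw [Complex.exp_eq_exp_iff_exists_int]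
      exact ⟨n, by push_cast; ring⟩
    rw [this, sub_self, zero_div]

lemma ek_cont (k : Z2) : Continuous (ek k) := by
  unfold ek dotZ
  fun_prop

lemma fCoeff_ek (k k' : Z2) : fCoeff (ek k) k' = if k = k' then 1 else 0 := by
  unfold fCoeff
  rw [Q2_eq]
  have e : ∀ x : ℝ × ℝ, ek k x * Complex.exp (-Complex.I * (dotZ k' x : ℝ)) =
      Complex.exp (Complex.I * ((((k.1 - k'.1 : ℤ) : ℝ) * x.1 : ℝ) : ℂ)) *
      Complex.exp (Complex.I * ((((k.2 - k'.2 : ℤ) : ℝ) * x.2 : ℝ) : ℂ)) := by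
    intro x
    unfold ek dotZ
    rw [← Complex.exp_add, ← Complex.exp_add]
    congr 1
    push_cast
    ring
  simp only [e]
  have hp : (Real.pi : ℂ) ≠ 0 := by exact_mod_cast Real.pi_ne_zero
  rw [Measure.volume_eq_prod, setIntegral_prod_mul
    (fun x : ℝ => Complex.exp (Complex.I * ((((k.1 - k'.1 : ℤ) : ℝ) * x : ℝ) : ℂ)))
    (fun x : ℝ => Complex.exp (Complex.I * ((((k.2 - k'.2 : ℤ) : ℝ) * x : ℝ) : ℂ))),
    exp_int_one, exp_int_one]
  rcases k with ⟨a, b⟩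
  rcases k' with ⟨c, d⟩
  simp only [sub_eq_zero, Prod.mk.injEq]
  by_cases h1 : a = c <;> by_cases h2 : b = d <;> simp [h1, h2]
  field_simp

/-- trigonometric polynomial -/
def tp (S : Finset Z2) (a : Z2 → ℂ) : ℝ × ℝ → ℂ := fun x => ∑ k ∈ S, a k * ek k x

lemma tp_cont (S : Finset Z2) (a : Z2 → ℂ) : Continuous (tp S a) := by
  unfold tp
  exact continuous_finsetSum _ fun k _ => continuous_const.mul (ek_cont k)

lemma fc_cont (k : Z2) {f : ℝ × ℝ → ℂ} (hf : Continuous f) :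
    Continuous fun x => f x * Complex.exp (-Complex.I * (dotZ k x : ℝ)) := by
  unfold dotZ
  fun_prop

lemma fc_int (k : Z2) {f : ℝ × ℝ → ℂ} (hf : Continuous f) :
    IntegrableOn (fun x => f x * Complex.exp (-Complex.I * (dotZ k x : ℝ))) Q2 :=
  (fc_cont k hf).continuousOn.integrableOn_compact isCompact_Icc

lemma fCoeff_tp (S : Finset Z2) (a : Z2 → ℂ) (k : Z2) :
    fCoeff (tp S a) k = if k ∈ S then a k else 0 := by
  have h : fCoeff (tp S a) k = ∑ j ∈ S, a j * fCoeff (ek j) k := by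
    unfold fCoeff tp
    simp only [Finset.sum_mul]
    rw [integral_finsetSum]
    · rw [Finset.mul_sum]
      refine Finset.sum_congr rfl fun j _ => ?_
      simp only [mul_assoc (a j)]
      rw [integral_const_mul]
      ring
    · intro j _
      simp only [mul_assoc (a j)]
      exact (fc_int k (ek_cont j)).const_mul _
  rw [h]
  simp [fCoeff_ek]

lemma Tmult_tp (S : Finset Z2) (a m : Z2 → ℂ) :
    Tmult m (tp S a) = tp S (fun k => m k * a k) := by
  funext x
  unfold Tmult
  rw [tsum_eq_sum (s := S)]
  · refine Finset.sum_congr rfl fun k hk => ?_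
    rw [fCoeff_tp, if_pos hk]
    rfl
  · intro k hk
    rw [fCoeff_tp, if_neg hk]
    simp

/-- coordinates -/
def kc (j : Fin 2) (k : Z2) : ℝ := if j = 0 then (k.1 : ℝ) else (k.2 : ℝ)

lemma ek_deriv (j : Fin 2) (k : Z2) (x : ℝ × ℝ) :
    ∃ L : ℝ × ℝ →L[ℝ] ℂ, HasFDerivAt (ek k) L x ∧
      L (if j = 0 then ((1 : ℝ), (0 : ℝ)) else ((0 : ℝ), (1 : ℝ))) =
        Complex.I * (kc j k : ℂ) * ek k x := by
  have h1 : HasFDerivAt (fun x : ℝ × ℝ => dotZ k x)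
      ((k.1 : ℝ) • ContinuousLinearMap.fst ℝ ℝ ℝ + (k.2 : ℝ) • ContinuousLinearMap.snd ℝ ℝ ℝ) x :=
    (hasFDerivAt_fst.const_mul (k.1 : ℝ)).add (hasFDerivAt_snd.const_mul (k.2 : ℝ))
  have h2 := ((Complex.ofRealCLM.hasFDerivAt.comp x h1).const_mul Complex.I).cexp
  refine ⟨_, h2, ?_⟩
  unfold kc ek
  fin_cases j <;> simp <;> ring

lemma pd_tp (j : Fin 2) (S : Finset Z2) (a : Z2 → ℂ) :
    pd j (tp S a) = tp S (fun k => Complex.I * (kc j k : ℂ) * a k) := by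
  funext x
  choose L hL hL2 using fun k => ek_deriv j k x
  have h : HasFDerivAt (tp S a) (∑ k ∈ S, a k • L k) x := by
    unfold tp
    exact HasFDerivAt.fun_sum fun k _ => (hL k).const_mul (a k)
  unfold pd dirD
  rw [h.fderiv]
  simp only [sum_apply, smul_apply, hL2, smul_eq_mul]
  unfold tp
  refine Finset.sum_congr rfl fun k _ => ?_
  ring

lemma uniq_one {f : ℝ → ℂ} (hf : Continuous f) (hp : ∀ x, f (x + 2 * Real.pi) = f x)
    (h : ∀ n : ℤ, ∫ x in -Real.pi..Real.pi, f x * Complex.exp (-Complex.I * ((n * x : ℝ) : ℂ)) = 0) :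
    ∀ x, f x = 0 := by
  have : Fact (0 < 2 * Real.pi) := ⟨by positivity⟩
  have hper : Function.Periodic f (2 * Real.pi) := hp
  let F : C(AddCircle (2 * Real.pi), ℂ) :=
    ⟨hper.lift, continuous_coinduced_dom.mpr hf⟩
  have hF : ∀ x : ℝ, F (x : AddCircle (2 * Real.pi)) = f x := fun x => rfl
  have hz : ∀ n, fourierCoeff F n = 0 := by
    intro n
    rw [fourierCoeff_eq_intervalIntegral _ n (-Real.pi), show -Real.pi + 2 * Real.pi = Real.pi by ring]
    have e : ∀ x : ℝ, fourier (-n) (x : AddCircle (2 * Real.pi)) • F (x : AddCircle (2 * Real.pi)) =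
        f x * Complex.exp (-Complex.I * ((n * x : ℝ) : ℂ)) := by
      intro x
      rw [hF, fourier_coe_apply, smul_eq_mul, mul_comm]
      congr 2
      have hpi : (Real.pi : ℂ) ≠ 0 := by exact_mod_cast Real.pi_ne_zero
      push_cast
      field_simp
    simp only [e, h n, smul_zero]
  intro x
  have hs := has_pointwise_sum_fourier_series_of_summable (f := F)
    (by rw [show fourierCoeff F = 0 from funext hz]; exact summable_zero) (x : AddCircle (2 * Real.pi))
  simp only [hz, zero_smul] at hs
  rw [← hF]
  exact hs.unique hasSum_zero

lemma uniq_two {g : ℝ × ℝ → ℂ} (hg : Continuous g) (hp : Periodic2 g)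
    (h : ∀ k, fCoeff g k = 0) : ∀ x, g x = 0 := by
  have hpi : (Real.pi : ℂ) ≠ 0 := by exact_mod_cast Real.pi_ne_zero
  have key : ∀ (n : ℤ) (x : ℝ),
      ∫ y in -Real.pi..Real.pi, g (x, y) * Complex.exp (-Complex.I * ((n * y : ℝ) : ℂ)) = 0 := by
    intro n
    refine uniq_one ?_ ?_ ?_
    · apply intervalIntegral.continuous_parametric_intervalIntegral_of_continuous'
      unfold Function.uncurry
      fun_prop
    · intro x
      simp only [(hp (x, _)).1]
    · intro m
      have hk := h (m, n)
      unfold fCoeff at hk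
      have hk2 := (mul_eq_zero.mp hk).resolve_left (by simp [Real.pi_ne_zero])
      have hi := fc_int (m, n) hg
      rw [Q2_eq] at hk2 hi
      rw [Measure.volume_eq_prod] at hk2 hi
      rw [setIntegral_prod _ hi] at hk2
      rw [← hk2, intervalIntegral.integral_of_le pi_le, ← integral_Icc_eq_integral_Ioc]
      refine integral_congr_ae (ae_of_all _ fun x => ?_)
      simp only
      rw [intervalIntegral.integral_of_le pi_le, ← integral_Icc_eq_integral_Ioc,
        ← integral_mul_const]
      refine integral_congr_ae (ae_of_all _ fun y => ?_)
      simp only [mul_assoc]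
      rw [← Complex.exp_add]
      congr 2
      unfold dotZ
      push_cast
      ring
  rintro ⟨x, y⟩
  exact uniq_one (f := fun y => g (x, y)) (by fun_prop) (fun y => (hp (x, y)).2) (fun n => key n x) y

lemma ek_per (k : Z2) : Periodic2 (ek k) := by
  intro x
  unfold ek dotZ
  constructor
  · rw [Complex.exp_eq_exp_iff_exists_int]
    exact ⟨k.1, by push_cast; ring⟩
  · rw [Complex.exp_eq_exp_iff_exists_int]
    exact ⟨k.2, by push_cast; ring⟩

lemma tp_per (S : Finset Z2) (a : Z2 → ℂ) : Periodic2 (tp S a) := by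
  intro x
  unfold tp
  constructor
  · exact Finset.sum_congr rfl fun k _ => by rw [(ek_per k x).1]
  · exact Finset.sum_congr rfl fun k _ => by rw [(ek_per k x).2]

lemma eq_tp {b : ℝ × ℝ → ℂ} (hb : Continuous b) (hp : Periodic2 b) (S : Finset Z2)
    (h : ∀ k ∉ S, fCoeff b k = 0) : b = tp S (fCoeff b) := by
  have := uniq_two (g := fun x => b x - tp S (fCoeff b) x) (hb.sub (tp_cont S _)) ?_ ?_
  · funext x
    exact sub_eq_zero.mp (this x)
  · intro x
    have h1 := hp x
    have h2 := tp_per S (fCoeff b) x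
    simp only [h1.1, h1.2, h2.1, h2.2, and_self]
  · intro k
    have e : fCoeff (fun x => b x - tp S (fCoeff b) x) k = fCoeff b k - fCoeff (tp S (fCoeff b)) k := by
      unfold fCoeff
      rw [← mul_sub, ← integral_sub (fc_int k hb) (fc_int k (tp_cont S _))]
      simp only [sub_mul]
    rw [e, fCoeff_tp]
    split_ifs with hk
    · simp
    · rw [h k hk, sub_zero]

lemma tp_le_sup (S : Finset Z2) (a : Z2 → ℂ) (x : ℝ × ℝ) : ‖tp S a x‖ ≤ supNorm (tp S a) := by
  unfold supNorm
  refine le_ciSup (f := fun x => ‖tp S a x‖) ⟨∑ k ∈ S, ‖a k‖, ?_⟩ x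
  rintro _ ⟨y, rfl⟩
  refine (norm_sum_le _ _).trans (Finset.sum_le_sum fun k _ => ?_)
  rw [norm_mul]
  unfold ek
  rw [mul_comm I, Complex.norm_exp_ofReal_mul_I, mul_one]

lemma Bd.sup {S : Finset Z2} {m : Z2 → ℂ} {c : ℝ} (h : Bd S m c) (a : Z2 → ℂ) :
    (∀ x, ‖tp S (fun k => m k * a k) x‖ ≤ c * supNorm (tp S a)) ∧
    supNorm (tp S (fun k => m k * a k)) ≤ c * supNorm (tp S a) := by
  have := h a _ (tp_le_sup S a)
  exact ⟨this, ciSup_le this⟩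

lemma finite_S (μ : ℝ) : ∃ S : Finset Z2, ∀ k, k ∈ S ↔ knorm k ≤ μ := by
  have : {k : Z2 | knorm k ≤ μ}.Finite := by
    refine (Set.finite_Icc ((-⌈μ⌉, -⌈μ⌉) : Z2) (⌈μ⌉, ⌈μ⌉)).subset ?_
    intro k hk
    have hk' : knorm k ≤ μ := hk
    have h1 : |(k.1 : ℝ)| ≤ knorm k := Real.abs_le_sqrt (by nlinarith [sq_nonneg (k.2 : ℝ)])
    have h2 : |(k.2 : ℝ)| ≤ knorm k := Real.abs_le_sqrt (by nlinarith [sq_nonneg (k.1 : ℝ)])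
    have h3 := Int.le_ceil μ
    have h4 : |k.1| ≤ ⌈μ⌉ := by
      have : |(k.1 : ℝ)| ≤ ⌈μ⌉ := by linarith
      exact_mod_cast this
    have h5 : |k.2| ≤ ⌈μ⌉ := by
      have : |(k.2 : ℝ)| ≤ ⌈μ⌉ := by linarith
      exact_mod_cast this
    rw [abs_le] at h4 h5
    exact ⟨⟨h4.1, h5.1⟩, ⟨h4.2, h5.2⟩⟩
  exact ⟨this.toFinset, fun k => by simp⟩

lemma bd_third : ∃ C : ℝ, 0 ≤ C ∧ ∀ (S : Finset Z2) (μ : ℝ) (e l p : ℝ × ℝ) (α β γ : ℝ), 0 < μ →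
    (∀ k ∈ S, knorm k ≤ μ) → e.1 ^ 2 + e.2 ^ 2 ≤ 1 → l.1 ^ 2 + l.2 ^ 2 ≤ 1 →
    p.1 ^ 2 + p.2 ^ 2 ≤ 1 →
    Bd S (fun k => ((lin e k * lin l k * lin p k ^ 2 *
      (α * (k.1 : ℝ) ^ 2 + β * (k.2 : ℝ) ^ 2 + γ * ((k.1 : ℝ) * (k.2 : ℝ))) / ksq k ^ 2 : ℝ) : ℂ))
      ((|α| + |β| + |γ|) * (C * μ ^ 2)) := by
  obtain ⟨C, hC, h⟩ := bd_six
  refine ⟨C, hC, ?_⟩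
  intro S μ e l p α β γ hμ hS he hl hp
  have key : ∀ u w : ℝ × ℝ, u.1 ^ 2 + u.2 ^ 2 ≤ 1 → w.1 ^ 2 + w.2 ^ 2 ≤ 1 →
      Bd S (fun k => ((lin e k * lin l k * lin p k ^ 2 * (lin u k * lin w k) / ksq k ^ 2 : ℝ) : ℂ))
        (C * μ ^ 2) := by
    intro u w hu hw
    refine (h S μ ![e, l, p, p, u, w] hμ hS ?_).congr fun k _ => ?_
    · intro i
      fin_cases i <;> simp [he, hl, hp, hu, hw]
    · congr 2
      simp [Fin.prod_univ_succ]
      ring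
  have h1 := (key (1, 0) (1, 0) (by norm_num) (by norm_num)).smul (α : ℂ)
  have h2 := (key (0, 1) (0, 1) (by norm_num) (by norm_num)).smul (β : ℂ)
  have h3 := (key (1, 0) (0, 1) (by norm_num) (by norm_num)).smul (γ : ℂ)
  refine (((h1.add h2).add h3).congr fun k _ => ?_).mono (le_of_eq ?_)
  · have a1 : lin (1, 0) k = k.1 := by simp [lin]
    have a2 : lin (0, 1) k = k.2 := by simp [lin]
    rw [a1, a2, ← Complex.ofReal_mul, ← Complex.ofReal_mul, ← Complex.ofReal_mul,
      ← Complex.ofReal_add, ← Complex.ofReal_add]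
    congr 1
    ring
  · simp only [Complex.norm_real, Real.norm_eq_abs]
    ring

lemma knorm_shift {l : ℝ × ℝ} {lam : ℝ} {κ : Z2} (hl : l.1 ^ 2 + l.2 ^ 2 = 1) (h0 : 0 < lam)
    (h1 : (κ.1 : ℝ) = lam * l.1) (h2 : (κ.2 : ℝ) = lam * l.2) (k : Z2) :
    knorm (κ + k) = lam * √((1 + lin l k / lam) ^ 2 + (lin (-l.2, l.1) k / lam) ^ 2) ∧
    knorm (κ - k) = lam * √((1 - lin l k / lam) ^ 2 + (lin (-l.2, l.1) k / lam) ^ 2) := by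
  have e : ∀ y, lam * √y = √(lam ^ 2 * y) := fun y => by
    rw [Real.sqrt_mul (sq_nonneg _), Real.sqrt_sq h0.le]
  rw [e, e]
  unfold knorm lin
  constructor <;> congr 1 <;> simp only [Prod.fst_add, Prod.snd_add, Prod.fst_sub, Prod.snd_sub] <;>
    push_cast <;> rw [h1, h2] <;> field_simp <;>
    linear_combination (lam ^ 2 - (k.1 : ℝ) ^ 2 - (k.2 : ℝ) ^ 2) * hl

lemma lin_sq {l : ℝ × ℝ} (hl : l.1 ^ 2 + l.2 ^ 2 = 1) (k : Z2) :
    lin l k ^ 2 + lin (-l.2, l.1) k ^ 2 = ksq k := by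
  unfold lin ksq
  linear_combination ((k.1 : ℝ) ^ 2 + (k.2 : ℝ) ^ 2) * hl

lemma knorm_sq (k : Z2) : knorm k ^ 2 = ksq k := Real.sq_sqrt (by positivity)

lemma bd_all : ∃ C : ℝ, 0 ≤ C ∧ ∀ (l : ℝ × ℝ) (lam μ : ℝ) (κ : Z2) (S : Finset Z2),
    l.1 ^ 2 + l.2 ^ 2 = 1 → 0 < lam → (κ.1 : ℝ) = lam * l.1 → (κ.2 : ℝ) = lam * l.2 →
    0 < μ → μ ≤ lam / 2 → (∀ k ∈ S, knorm k ≤ μ) →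
    Bd S (fun k => (((knorm (κ + k) + knorm (κ - k)) / 2 - lam : ℝ) : ℂ)) (2 * lam⁻¹ * μ ^ 2) ∧
    Bd S (fun k => Complex.I * (((knorm (κ + k) - knorm (κ - k)) / 2 -
      (l.1 * (k.1 : ℝ) + l.2 * (k.2 : ℝ)) : ℝ) : ℂ)) (4 * lam⁻¹ ^ 2 * μ ^ 3) ∧
    ∀ (j : Fin 2) (α β γ : ℝ), |α| + |β| + |γ| ≤ 6 →
      Bd S (fun k => (((α * (k.1 : ℝ) ^ 2 + β * (k.2 : ℝ) ^ 2 + γ * ((k.1 : ℝ) * (k.2 : ℝ))) / ksq k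
        : ℝ) : ℂ) * (deltaInvSym k * (Complex.I * (kc j k : ℂ) *
        (Complex.I * (((knorm (κ + k) - knorm (κ - k)) / 2 -
      (l.1 * (k.1 : ℝ) + l.2 * (k.2 : ℝ)) : ℝ) : ℂ))))) (C * lam⁻¹ ^ 2 * μ ^ 2) := by
  obtain ⟨C, hC, hthird⟩ := bd_third
  refine ⟨24 * C, by positivity, ?_⟩
  intro l lam μ κ S hl h0 h1 h2 hμ hμl hS
  set p : ℝ × ℝ := (-l.2, l.1) with hp
  have hp1 : p.1 ^ 2 + p.2 ^ 2 ≤ 1 := by simp only [hp]; nlinarith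
  have hε : μ / lam ≤ 1 / 2 := by rw [div_le_iff₀ h0]; linarith
  have lc : (lam : ℂ) ≠ 0 := by exact_mod_cast h0.ne'
  have hlin : ∀ v : ℝ × ℝ, v.1 ^ 2 + v.2 ^ 2 ≤ 1 →
      Bd S (fun k => ((lin v k / lam : ℝ) : ℂ)) (μ / lam) := by
    intro v hv
    refine (((bd_lin hμ hS hv).smul ((lam⁻¹ : ℝ) : ℂ)).congr fun k _ => ?_).mono (le_of_eq ?_)
    · push_cast; field_simp
    · rw [Complex.norm_real, Real.norm_of_nonneg (inv_pos.mpr h0).le]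
      field_simp
  have ha := hlin l hl.le
  have hb := hlin p hp1
  have han : Bd S (fun k => ((-(lin l k / lam) : ℝ) : ℂ)) (μ / lam) := by
    refine (ha.smul (-1)).congr (fun k _ => ?_) |>.mono (by simp)
    push_cast; ring
  have hab : ∀ k ∈ S, (lin l k / lam) ^ 2 + (lin p k / lam) ^ 2 ≤ 1 / 4 := by
    intro k hk
    have h3 := lin_sq hl k
    have h4 := hS k hk
    have h5 := knorm_sq k
    have h6 : 0 ≤ knorm k := Real.sqrt_nonneg _
    rw [div_pow, div_pow, ← add_div, hp, h3, div_le_iff₀ (by positivity), ← h5]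
    nlinarith
  have hG1 := bd_G (ha.mono hε) (hb.mono hε) hb hab
  have hG2 := bd_G (han.mono hε) (hb.mono hε) hb (by simpa using hab)
  obtain ⟨R, hR, hReq⟩ := bd_R (ha.mono hε) (hb.mono hε) hab
  have hm2 : ∀ k ∈ S, (((knorm (κ + k) - knorm (κ - k)) / 2 -
      (l.1 * (k.1 : ℝ) + l.2 * (k.2 : ℝ)) : ℝ) : ℂ) = ((lam⁻¹ ^ 2 : ℝ) : ℂ) *
      ((lin l k * lin p k ^ 2 : ℝ) : ℂ) * R k := by
    intro k hk
    obtain ⟨e1, e2⟩ := knorm_shift hl h0 h1 h2 k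
    have e3 := hReq k hk
    have e4 : l.1 * (k.1 : ℝ) + l.2 * (k.2 : ℝ) = lam * (lin l k / lam) := by
      unfold lin; field_simp
    rw [e4, e1, e2]
    have e5 : ∀ A B D : ℝ, (((lam * A - lam * B) / 2 - lam * D : ℝ) : ℂ) =
        lam * (((A - B) / 2 - D : ℝ) : ℂ) := fun A B D => by push_cast; ring
    rw [e5, e3]
    push_cast
    field_simp
  refine ⟨?_, ?_, ?_⟩
  · refine (((hG1.add hG2).smul ((lam / 2 : ℝ) : ℂ)).congr fun k _ => ?_).mono (le_of_eq ?_)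
    · obtain ⟨e1, e2⟩ := knorm_shift hl h0 h1 h2 k
      rw [e1, e2, ← sub_eq_add_neg]
      push_cast
      ring
    · rw [Complex.norm_real, Real.norm_of_nonneg (by positivity)]
      field_simp
      ring
  · have q := (((bd_lin hμ hS hl.le).mul ((bd_lin hμ hS hp1).mul (bd_lin hμ hS hp1))).mul hR).smul
      (Complex.I * ((lam⁻¹ ^ 2 : ℝ) : ℂ))
    refine (q.congr fun k hk => ?_).mono (le_of_eq ?_)
    · simp only [hm2 k hk]
      push_cast
      ring
    · rw [norm_mul, Complex.norm_I, Complex.norm_real, Real.norm_of_nonneg (by positivity)]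
      ring
  · intro j α β γ hs
    set e : ℝ × ℝ := if j = 0 then (1, 0) else (0, 1) with he
    have he1 : e.1 ^ 2 + e.2 ^ 2 ≤ 1 := by rw [he]; split_ifs <;> norm_num
    have hkc : ∀ k, lin e k = kc j k := by
      intro k
      rw [he]
      unfold kc lin
      split_ifs <;> simp
    have q := ((hthird S μ e l p α β γ hμ hS he1 hl.le hp1).mul hR).smul ((lam⁻¹ ^ 2 : ℝ) : ℂ)
    refine (q.congr fun k hk => ?_).mono ?_
    · rw [hm2 k hk, hkc]
      unfold deltaInvSym
      rw [knorm_sq]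
      by_cases h : k = 0
      · subst h
        simp [lin]
      · rw [if_neg h]
        have hk0 : (ksq k : ℂ) ≠ 0 := by exact_mod_cast (ksq_pos h).ne'
        push_cast
        field_simp
        ring_nf
        simp only [Complex.I_sq]
        ring
    · rw [Complex.norm_real, Real.norm_of_nonneg (by positivity)]
      have : (|α| + |β| + |γ|) * (C * μ ^ 2) ≤ 6 * (C * μ ^ 2) := by gcongr
      have h7 : 0 ≤ lam⁻¹ ^ 2 := by positivity
      nlinarith

lemma supNorm_nonneg (f : ℝ × ℝ → ℂ) : 0 ≤ supNorm f := Real.iSup_nonneg fun _ => norm_nonneg _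

lemma RoSym_eq (k : Z2) :
    RoSym 0 k = (-(25 / 12) * (k.1 : ℝ) ^ 2 + 25 / 12 * (k.2 : ℝ) ^ 2 +
      0 * ((k.1 : ℝ) * (k.2 : ℝ))) / ksq k ∧
    RoSym 1 k = (-(7 / 12) * (k.1 : ℝ) ^ 2 + 7 / 12 * (k.2 : ℝ) ^ 2 +
      4 * ((k.1 : ℝ) * (k.2 : ℝ))) / ksq k := by
  unfold RoSym
  by_cases h : k = 0
  · subst h; simp [ksq]
  · have hk := ksq_pos h
    unfold ksq at hk ⊢
    rw [if_neg h, if_neg h]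
    simp only [if_true, one_ne_zero, if_false]
    constructor <;> field_simp <;> ring

/-- Lemma A.2: for `|l| = 1`, `λl ∈ ℤ²`, `10 ≤ μ ≤ λ/2` and `b₀` real with
Fourier support in `{|k| ≤ μ}`:
`‖T¹_{λl} b₀‖_∞ ≤ C λ⁻¹ μ² ‖b₀‖_∞`, `‖T²_{λl} b₀‖_∞ ≤ C λ⁻² μ³ ‖b₀‖_∞`, and
`‖Δ⁻¹∇ T²_{λl} b₀‖_X ≤ C ‖b₀‖_∞ λ⁻² μ² log μ`. -/
theorem stmt12 : ∃ C : ℝ, ∀ (l : ℝ × ℝ) (lam μ : ℝ) (κ : Z2) (b₀ : ℝ × ℝ → ℂ),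
    l.1 ^ 2 + l.2 ^ 2 = 1 → 0 < lam → (κ.1 : ℝ) = lam * l.1 → (κ.2 : ℝ) = lam * l.2 →
    10 ≤ μ → μ ≤ lam / 2 →
    ContDiff ℝ (⊤ : ℕ∞) b₀ → Periodic2 b₀ → RealValued b₀ →
    (∀ k : Z2, μ < knorm k → fCoeff b₀ k = 0) →
    (∀ x, ‖T1op κ lam b₀ x‖ ≤ C * lam⁻¹ * μ ^ 2 * supNorm b₀) ∧
    (∀ x, ‖T2op κ l b₀ x‖ ≤ C * lam⁻¹ ^ 2 * μ ^ 3 * supNorm b₀) ∧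
    Xnorm (Tmult deltaInvSym (pd 0 (T2op κ l b₀)))
        + Xnorm (Tmult deltaInvSym (pd 1 (T2op κ l b₀)))
      ≤ C * supNorm b₀ * lam⁻¹ ^ 2 * μ ^ 2 * Real.log μ := by
  obtain ⟨D, hD, hall⟩ := bd_all
  refine ⟨4 + 6 * D, ?_⟩
  intro l lam μ κ b₀ hl h0 h1 h2 hμ hμl hb hper _ hsupp
  obtain ⟨S, hS⟩ := finite_S μ
  have hμ0 : 0 < μ := by linarith
  obtain ⟨B1, B2, B3⟩ := hall l lam μ κ S hl h0 h1 h2 hμ0 hμl (fun k hk => (hS k).mp hk)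
  have hbt := eq_tp hb.continuous hper S
    (fun k hk => hsupp k (not_le.mp fun h => hk ((hS k).mpr h)))
  generalize fCoeff b₀ = c at hbt
  subst hbt
  set N := supNorm (tp S c) with hN
  have hN0 : 0 ≤ N := supNorm_nonneg _
  have hil : 0 < lam⁻¹ := inv_pos.mpr h0
  refine ⟨fun x => ?_, fun x => ?_, ?_⟩
  · unfold T1op
    rw [Tmult_tp]
    refine ((B1.sup c).1 x).trans ?_
    gcongr
    linarith
  · unfold T2op
    rw [Tmult_tp]
    refine ((B2.sup c).1 x).trans ?_
    gcongr
    linarith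
  · have hX : ∀ j : Fin 2, Xnorm (Tmult deltaInvSym (pd j (T2op κ l (tp S c)))) ≤
        3 * (D * lam⁻¹ ^ 2 * μ ^ 2 * N) := by
      intro j
      unfold Xnorm Ro T2op
      rw [Tmult_tp, pd_tp, Tmult_tp, Tmult_tp, Tmult_tp]
      have s1 := ((B3 j 1 1 0 (by norm_num)).sup c).2
      have s2 := ((B3 j (-(25 / 12)) (25 / 12) 0 (by norm_num [abs_of_pos])).sup c).2
      have s3 := ((B3 j (-(7 / 12)) (7 / 12) 4 (by norm_num [abs_of_pos])).sup c).2
      simp only [← (RoSym_eq _).1] at s2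
      simp only [← (RoSym_eq _).2] at s3
      have e1 : ∀ k : Z2, (((1 * (k.1 : ℝ) ^ 2 + 1 * (k.2 : ℝ) ^ 2 + 0 * (k.1 : ℝ) * (k.2 : ℝ)) /
          ksq k : ℝ) : ℂ) * deltaInvSym k = deltaInvSym k := by
        intro k
        by_cases h : k = 0
        · subst h; simp [deltaInvSym]
        · have hk := (ksq_pos h).ne'
          have : (1 * (k.1 : ℝ) ^ 2 + 1 * (k.2 : ℝ) ^ 2 + 0 * (k.1 : ℝ) * (k.2 : ℝ)) = ksq k := by
            unfold ksq; ring
          rw [this, div_self hk, Complex.ofReal_one, one_mul]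
      simp only [← mul_assoc, e1] at s1 s2 s3 ⊢
      linarith
    have hlog : 1 ≤ Real.log μ := by
      rw [Real.le_log_iff_exp_le hμ0]
      have := Real.exp_one_lt_d9
      linarith
    have hP : 0 ≤ lam⁻¹ ^ 2 * μ ^ 2 * N := by positivity
    calc _ ≤ 3 * (D * lam⁻¹ ^ 2 * μ ^ 2 * N) + 3 * (D * lam⁻¹ ^ 2 * μ ^ 2 * N) :=
          add_le_add (hX 0) (hX 1)
      _ = (6 * D) * (lam⁻¹ ^ 2 * μ ^ 2 * N) := by ring
      _ ≤ (4 + 6 * D) * (lam⁻¹ ^ 2 * μ ^ 2 * N) := by gcongr; linarith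
      _ = (4 + 6 * D) * (lam⁻¹ ^ 2 * μ ^ 2 * N) * 1 := by ring
      _ ≤ (4 + 6 * D) * (lam⁻¹ ^ 2 * μ ^ 2 * N) * Real.log μ := by gcongr
      _ = _ := by ring


end
end

section
/- There is an absolute constant C such that the following holds. Let l ∈ ℝ² with |l| = 1, λ > 0 with λl ∈ ℤ², μ > 0 with μ ≤ λ/2, and let b₀ : 𝕋² → ℝ be smooth with Fourier support contained in {|k| ≤ μ}. Then there exist kernels K₁, ..., K₆ ∈ L¹(ℝ² × ℝ²) with ‖K_i‖_{L¹(ℝ⁴)} ≤ C, such that, denoting m_i the Fourier transform of K_i and T_{m_i}(·,·) the associated bilinear multiplier: b₀ · (T^{(2)}_{λl} b₀) = (μ²/λ²) ∑_{i=1}^{2} ∂_{x_i} T_{m_i}(b₀, b₀); (T^{(1)}_{λl} b₀) · ∂_{x₁} b₀ = (μ²/λ) ∑_{i=1}^{2} ∂_{x_i} T_{m_{i+2}}(b₀, b₀); and (T^{(1)}_{λl} b₀) · ∂_{x₂} b₀ = (μ²/λ) ∑_{i=1}^{2} ∂_{x_i} T_{m_{i+4}}(b₀, b₀). -/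
open MeasureTheory Complex Filter
open scoped ENNReal NNReal

noncomputable section

theorem slice_bound {Θ V : Type*} [NormedAddCommGroup Θ] [NormedSpace ℝ Θ]
    [NormedAddCommGroup V] [NormedSpace ℝ V] (Φ : Θ × V → ℂ) (P : Set Θ) (S : Set V)
    (hP : IsCompact P) (hS : IsCompact S)
    (h : ∀ θ ∈ P, ∀ v ∈ S, ContDiffAt ℝ (⊤ : ℕ∞) Φ (θ, v)) (n : ℕ) :
    ∃ C : ℝ, 0 ≤ C ∧ ∀ θ ∈ P, ∀ v ∈ S, ‖iteratedFDeriv ℝ n (fun v => Φ (θ, v)) v‖ ≤ C := by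
  have hcont : ContinuousOn (iteratedFDeriv ℝ n Φ) (P ×ˢ S) := by
    rintro ⟨θ, v⟩ ⟨h1, h2⟩
    have := (h θ h1 v h2).iteratedFDeriv_right (m := 0) (i := n) (by rw [zero_add]; exact_mod_cast le_top)
    exact this.continuousAt.continuousWithinAt
  obtain ⟨C, hC⟩ := (hP.prod hS).exists_bound_of_continuousOn hcont
  refine ⟨max C 0, le_max_right _ _, fun θ hθ v hv => ?_⟩
  have key : ‖iteratedFDeriv ℝ n (fun v => Φ (θ, v)) v‖ ≤ ‖iteratedFDeriv ℝ n Φ (θ, v)‖ := by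
    let g : Θ × V → ℂ := fun z => Φ ((θ, 0) + z)
    let L : V →L[ℝ] Θ × V := ContinuousLinearMap.inr ℝ Θ V
    have e1 : (fun v => Φ (θ, v)) = g ∘ L := by
      ext v; simp [g, L]
    have e2 : iteratedFDeriv ℝ n g (L v) = iteratedFDeriv ℝ n Φ (θ, v) := by
      rw [iteratedFDeriv_comp_add_left]; simp [L]
    let U : Set (Θ × V) := {w | ContDiffAt ℝ n g w}
    have hU : IsOpen U := by
      rw [isOpen_iff_mem_nhds]
      intro w hw
      exact ContDiffAt.eventually hw (by simp)
    have hLU : L v ∈ U := by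
      have h1 : ContDiffAt ℝ n Φ ((θ, 0) + L v) := by
        simpa [L] using (h θ hθ v hv).of_le (by exact_mod_cast le_top)
      exact h1.comp (L v) (by fun_prop)
    have hLo : IsOpen (L ⁻¹' U) := hU.preimage L.continuous
    have e3 := L.iteratedFDerivWithin_comp_right (f := g) (s := U) (n := n)
      (fun w hw => ContDiffAt.contDiffWithinAt hw) hU.uniqueDiffOn hLo.uniqueDiffOn hLU
      (i := n) le_rfl
    rw [iteratedFDerivWithin_of_isOpen n hLo hLU, iteratedFDerivWithin_of_isOpen n hU hLU, e2] at e3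
    rw [e1, e3]
    refine (ContinuousMultilinearMap.norm_compContinuousLinearMap_le _ _).trans ?_
    have : ‖L‖ ≤ 1 := ContinuousLinearMap.norm_inr_le_one ℝ Θ V
    have h2 : ∏ _i : Fin n, ‖L‖ ≤ 1 := Finset.prod_le_one (fun _ _ => norm_nonneg _) (fun _ _ => this)
    exact mul_le_of_le_one_right (norm_nonneg _) h2
  exact key.trans ((hC _ ⟨hθ, hv⟩).trans (le_max_left _ _))

theorem family_L1 {Θ V : Type*} [NormedAddCommGroup Θ] [NormedSpace ℝ Θ]
    [NormedAddCommGroup V] [InnerProductSpace ℝ V] [FiniteDimensional ℝ V]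
    [MeasurableSpace V] [BorelSpace V]
    (Φ : Θ × V → ℂ) (P : Set Θ) (S : Set V)
    (hP : IsCompact P) (hS : IsCompact S)
    (h : ∀ θ ∈ P, ∀ v ∈ S, ContDiffAt ℝ (⊤ : ℕ∞) Φ (θ, v))
    (hz : ∀ θ ∈ P, tsupport (fun v => Φ (θ, v)) ⊆ S) :
    ∃ C : ℝ, 0 ≤ C ∧ ∀ θ ∈ P, ∃ φ : SchwartzMap V ℂ, (∫ v, ‖φ v‖) ≤ C ∧
      ∀ w, FourierTransform.fourier (φ : V → ℂ) w = Φ (θ, w) := by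
  let q : Seminorm ℂ (SchwartzMap V ℂ) :=
    (normSeminorm ℂ (Lp ℂ 1 (volume : Measure V))).comp
      ((SchwartzMap.toLpCLM ℂ ℂ 1 (volume : Measure V)).toLinearMap ∘ₗ
       (FourierTransform.fourierCLE ℂ (SchwartzMap V ℂ)).symm.toContinuousLinearMap.toLinearMap)
  have hq : Continuous q := by
    change Continuous fun f : SchwartzMap V ℂ => ‖(SchwartzMap.toLpCLM ℂ ℂ 1 (volume : Measure V)) ((FourierTransform.fourierCLE ℂ (SchwartzMap V ℂ)).symm f)‖
    exact continuous_norm.comp ((SchwartzMap.toLpCLM ℂ ℂ 1 (volume : Measure V)).continuous.comp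
      (FourierTransform.fourierCLE ℂ (SchwartzMap V ℂ)).symm.continuous)
  obtain ⟨s, C, -, hC⟩ := Seminorm.bound_of_continuous (schwartz_withSeminorms ℂ V ℂ) q hq
  choose B hB0 hB using slice_bound Φ P S hP hS h
  obtain ⟨R, hR⟩ := hS.isBounded.exists_norm_le
  let D : ℝ := ∑ i ∈ s, (max R 0) ^ i.1 * B i.2
  have hD : 0 ≤ D := Finset.sum_nonneg fun i _ => mul_nonneg (by positivity) (hB0 _)
  refine ⟨C * D, by positivity, fun θ hθ => ?_⟩
  have hcs : HasCompactSupport (fun v => Φ (θ, v)) := hS.of_isClosed_subset (isClosed_tsupport _) (hz θ hθ)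
  have hsm : ContDiff ℝ (⊤ : ℕ∞) (fun v => Φ (θ, v)) := by
    rw [contDiff_iff_contDiffAt]
    intro v
    by_cases hv : v ∈ S
    · exact (h θ hθ v hv).comp v (by fun_prop)
    · have : (fun v => Φ (θ, v)) =ᶠ[nhds v] fun _ => 0 :=
        notMem_tsupport_iff_eventuallyEq.mp (fun hh => hv (hz θ hθ hh))
      exact contDiffAt_const.congr_of_eventuallyEq this
  let f : SchwartzMap V ℂ := hcs.toSchwartzMap hsm
  have hf : (f : V → ℂ) = fun v => Φ (θ, v) := rfl
  refine ⟨FourierTransformInv.fourierInv f, ?_, ?_⟩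
  · have h1 : q f = ∫ v, ‖(FourierTransformInv.fourierInv f : SchwartzMap V ℂ) v‖ := by
      rw [← SchwartzMap.norm_toLp_one]; rfl
    rw [← h1]
    refine (hC f).trans ?_
    change (C : ℝ) * _ ≤ _
    gcongr
    refine Seminorm.finset_sup_apply_le hD fun i hi => ?_
    have hle : (max R 0) ^ i.1 * B i.2 ≤ D :=
      Finset.single_le_sum (f := fun i : ℕ × ℕ => (max R 0) ^ i.1 * B i.2)
        (fun i _ => mul_nonneg (by positivity) (hB0 _)) hi
    refine le_trans ?_ hle
    refine SchwartzMap.seminorm_le_bound ℂ i.1 i.2 f (mul_nonneg (by positivity) (hB0 _)) fun x => ?_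
    by_cases hx : x ∈ S
    · rw [hf]
      gcongr
      · exact (hR x hx).trans (le_max_left _ _)
      · exact hB _ θ hθ x hx
    · have : iteratedFDeriv ℝ i.2 f x = 0 := by
        have h3 := support_iteratedFDeriv_subset (𝕜 := ℝ) (f := f) i.2
        by_contra hne
        exact hx (hz θ hθ (h3 hne))
      rw [this]; simp only [norm_zero, mul_zero]
      exact mul_nonneg (by positivity) (hB0 _)
  · intro w
    rw [← SchwartzMap.fourier_coe, FourierTransform.fourier_fourierInv_eq]; rfl

/-- the Hilbert space used for the kernels -/
abbrev HV := WithLp 2 (WithLp 2 (ℝ × ℝ) × WithLp 2 (ℝ × ℝ))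

def toX (v : HV) : (ℝ × ℝ) × (ℝ × ℝ) := (v.ofLp.1.ofLp, v.ofLp.2.ofLp)
def ofX (z : (ℝ × ℝ) × (ℝ × ℝ)) : HV := WithLp.toLp 2 (WithLp.toLp 2 z.1, WithLp.toLp 2 z.2)

theorem toX_mp : MeasurePreserving toX := by
  have h1 : MeasurePreserving (WithLp.ofLp : HV → _) := WithLp.volume_preserving_ofLp _ _
  have h2 : MeasurePreserving (WithLp.ofLp : WithLp 2 (ℝ × ℝ) → _) := WithLp.volume_preserving_ofLp _ _
  exact (h2.prod h2).comp h1

def toXL : HV ≃L[ℝ] (ℝ × ℝ) × (ℝ × ℝ) :=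
  (WithLp.prodContinuousLinearEquiv 2 ℝ (WithLp 2 (ℝ × ℝ)) (WithLp 2 (ℝ × ℝ))).trans
   ((WithLp.prodContinuousLinearEquiv 2 ℝ ℝ ℝ).prodCongr (WithLp.prodContinuousLinearEquiv 2 ℝ ℝ ℝ))

theorem toXL_coe : (toXL : HV → _) = toX := rfl
theorem toXL_symm_coe : (toXL.symm : _ → HV) = ofX := rfl

theorem integral_X {E : Type*} [NormedAddCommGroup E] [NormedSpace ℝ E] (f : (ℝ × ℝ) × (ℝ × ℝ) → E) :
    ∫ z, f z = ∫ v : HV, f (toX v) := by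
  rw [toX_mp.integral_comp toXL.toHomeomorph.measurableEmbedding]

theorem integrable_X (f : (ℝ × ℝ) × (ℝ × ℝ) → ℂ) (h : Integrable (fun v : HV => f (toX v))) :
    Integrable f := (toX_mp.integrable_comp_emb toXL.toHomeomorph.measurableEmbedding).1 h

theorem mOf_eq (φ : SchwartzMap HV ℂ) (c : ℝ) (hc : 0 < c) :
    ∃ K : (ℝ × ℝ) × (ℝ × ℝ) → ℂ, Integrable K ∧ (∫ z, ‖K z‖) = ∫ v, ‖φ v‖ ∧
      ∀ ξ η : ℝ × ℝ, mOf K ξ η =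
        FourierTransform.fourier (φ : HV → ℂ) ((2 * Real.pi * c)⁻¹ • ofX (ξ, η)) := by
  set N := Module.finrank ℝ HV with hN
  have hpi := Real.pi_pos
  have hcN : (0:ℝ) < c ^ N := by positivity
  refine ⟨fun z => ((c ^ N : ℝ) : ℂ) * φ (c • ofX z), ?_, ?_, ?_⟩
  · apply integrable_X
    have : Integrable (fun v : HV => φ (c • v)) := φ.integrable.comp_smul hc.ne'
    exact this.const_mul _
  · rw [integral_X]
    change ∫ v : HV, ‖((c ^ N : ℝ) : ℂ) * φ (c • v)‖ = _
    simp_rw [norm_mul]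
    rw [integral_const_mul, Measure.integral_comp_smul volume (fun v => ‖φ v‖) c]
    rw [← hN, Complex.norm_real, Real.norm_of_nonneg hcN.le, abs_of_pos (by positivity), smul_eq_mul]
    field_simp
  · intro ξ η
    unfold mOf
    rw [integral_X, Real.fourier_eq']
    have := Measure.integral_comp_smul (volume : Measure HV) (fun v : HV => ((c ^ N : ℝ) : ℂ) * (Complex.exp (↑(-2 * Real.pi * inner ℝ v ((2 * Real.pi * c)⁻¹ • ofX (ξ, η))) * Complex.I) • φ v)) c
    rw [integral_const_mul, integral_const_mul, ← hN, abs_of_pos (by positivity : 0 < (c ^ N)⁻¹)] at this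
    have h2 : ∀ w : ℂ, (c ^ N)⁻¹ • (((c ^ N : ℝ) : ℂ) * w) = w := by
      intro w
      rw [Complex.real_smul, ← mul_assoc, ← Complex.ofReal_mul, inv_mul_cancel₀ hcN.ne']; simp
    rw [h2] at this
    rw [← this, ← integral_const_mul]
    congr 1
    ext v
    change ((c ^ N : ℝ) : ℂ) * φ (c • v) * _ = _
    rw [smul_eq_mul, mul_assoc, mul_comm (φ _)]
    congr 3
    rw [inner_smul_left, inner_smul_right]
    have e : inner ℝ v (ofX (ξ, η)) = ξ.1 * (toX v).1.1 + ξ.2 * (toX v).1.2 + η.1 * (toX v).2.1 + η.2 * (toX v).2.2 := by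
      simp [WithLp.prod_inner_apply, ofX, toX]
      ring
    rw [e]
    set r : ℝ := ξ.1 * (toX v).1.1 + ξ.2 * (toX v).1.2 + η.1 * (toX v).2.1 + η.2 * (toX v).2.2
    have e2 : -2 * Real.pi * ((starRingEnd ℝ) c * ((2 * Real.pi * c)⁻¹ * r)) = - r := by
      simp only [conj_trivial]
      field_simp
    rw [e2]; push_cast; ring

/-- uniform kernels for a smooth family of symbols -/
theorem kernel_family {Θ : Type*} [NormedAddCommGroup Θ] [NormedSpace ℝ Θ] (P : Set Θ)
    (hP : IsCompact P) (F : Θ × ((ℝ × ℝ) × (ℝ × ℝ)) → ℝ)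
    (hF : ∀ θ ∈ P, ∀ z : (ℝ × ℝ) × (ℝ × ℝ), ‖z‖ ≤ 5 / 4 → ContDiffAt ℝ (⊤ : ℕ∞) F (θ, z)) :
    ∃ C : ℝ, 0 ≤ C ∧ ∀ θ ∈ P, ∀ μ : ℝ, 0 < μ → ∃ K : (ℝ × ℝ) × (ℝ × ℝ) → ℂ,
      Integrable K ∧ (∫ z, ‖K z‖) ≤ C ∧
      ∀ ξ η : ℝ × ℝ, ‖ξ‖ ≤ μ → ‖η‖ ≤ μ →
        mOf K ξ η = ((F (θ, (μ⁻¹ • ξ, μ⁻¹ • η)) : ℝ) : ℂ) := by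
  let χ : ContDiffBump (0 : (ℝ × ℝ) × (ℝ × ℝ)) := ⟨1, 5 / 4, by norm_num, by norm_num⟩
  let Φ : Θ × HV → ℂ := fun w => ((χ (toXL w.2) * F (w.1, toXL w.2) : ℝ) : ℂ)
  let S : Set HV := toXL ⁻¹' (Metric.closedBall 0 (5 / 4))
  have hS : IsCompact S := toXL.toHomeomorph.isCompact_preimage.2 (isCompact_closedBall _ _)
  obtain ⟨C, hC0, hC⟩ := family_L1 Φ P S hP hS (by
      intro θ hθ v hv
      have hv' : ‖toXL v‖ ≤ 5 / 4 := by simpa [S] using hv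
      have h1 : ContDiffAt ℝ (⊤ : ℕ∞) (fun w : Θ × HV => F (w.1, toXL w.2)) (θ, v) :=
        ContDiffAt.comp (θ, v) (hF θ hθ _ hv') (by fun_prop)
      have h2 : ContDiffAt ℝ (⊤ : ℕ∞) (fun w : Θ × HV => χ (toXL w.2)) (θ, v) :=
        (χ.contDiff.comp (toXL.contDiff.comp contDiff_snd)).contDiffAt
      exact Complex.ofRealCLM.contDiff.contDiffAt.comp (θ, v) (h2.mul h1)) (by
      intro θ hθ
      have hcl : IsClosed S := hS.isClosed
      refine closure_minimal ?_ hcl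
      intro v hv
      by_contra hvS
      apply hv
      have h3 : χ (toXL v) = 0 := by
        apply χ.zero_of_le_dist
        have : ¬ (dist (toXL v) 0 ≤ 5 / 4) := hvS
        exact (not_le.1 this).le
      simp [Φ, h3])
  refine ⟨C, hC0, fun θ hθ μ hμ => ?_⟩
  obtain ⟨φ, h1, h2⟩ := hC θ hθ
  have hpi := Real.pi_pos
  obtain ⟨K, hK1, hK2, hK3⟩ := mOf_eq φ (μ / (2 * Real.pi)) (by positivity)
  refine ⟨K, hK1, hK2 ▸ h1, fun ξ η hξ hη => ?_⟩
  rw [hK3, h2]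
  have e : (2 * Real.pi * (μ / (2 * Real.pi)))⁻¹ = μ⁻¹ := by field_simp
  rw [e]
  have e2 : toXL (μ⁻¹ • ofX (ξ, η)) = (μ⁻¹ • ξ, μ⁻¹ • η) := by
    rw [map_smul, ← toXL_symm_coe]; simp
  have e3 : χ (μ⁻¹ • ξ, μ⁻¹ • η) = 1 := by
    apply χ.one_of_mem_closedBall
    rw [Metric.mem_closedBall, dist_zero_right]
    change ‖(μ⁻¹ • ξ, μ⁻¹ • η)‖ ≤ 1
    rw [Prod.norm_mk, norm_smul, norm_smul, norm_inv, Real.norm_of_nonneg hμ.le]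
    refine max_le ?_ ?_ <;> rw [inv_mul_le_iff₀ hμ] <;> linarith
  simp only [Φ, e2, e3, one_mul]

/-- parameters together with a pair of frequencies -/
abbrev WW := (ℝ × ℝ × ℝ) × ((ℝ × ℝ) × (ℝ × ℝ))

def PP : Set (ℝ × ℝ × ℝ) := {θ | θ.1 ^ 2 + θ.2.1 ^ 2 = 1 ∧ 0 ≤ θ.2.2 ∧ θ.2.2 ≤ 1 / 2}

def DomW : Set WW := {w | w.1 ∈ PP ∧ ‖w.2‖ ≤ 5 / 4}

theorem PP_compact : IsCompact PP := by
  apply Metric.isCompact_of_isClosed_isBounded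
  · have h1 : IsClosed {θ : ℝ × ℝ × ℝ | θ.1 ^ 2 + θ.2.1 ^ 2 = 1} :=
      isClosed_eq (by fun_prop) (by fun_prop)
    have h2 : IsClosed {θ : ℝ × ℝ × ℝ | 0 ≤ θ.2.2} := isClosed_le (by fun_prop) (by fun_prop)
    have h3 : IsClosed {θ : ℝ × ℝ × ℝ | θ.2.2 ≤ 1 / 2} := isClosed_le (by fun_prop) (by fun_prop)
    exact h1.inter (h2.inter h3)
  · refine (Metric.isBounded_closedBall (x := (0 : ℝ × ℝ × ℝ)) (r := 1)).subset ?_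
    rintro ⟨a, b, c⟩ ⟨h1, h2, h3⟩
    simp only at h1 h2 h3
    rw [Metric.mem_closedBall, dist_zero_right, Prod.norm_mk, Prod.norm_mk]
    refine max_le ?_ (max_le ?_ ?_) <;> rw [Real.norm_eq_abs, abs_le] <;> constructor <;> nlinarith

def Sm (f : WW → ℝ) : Prop := ∀ w ∈ DomW, ContDiffAt ℝ (⊤ : ℕ∞) f w

/-- the pair `a, b` is smooth with a smooth divided difference -/
def DD (a b : WW → ℝ) : Prop := Sm a ∧ Sm b ∧ ∃ D0 D1 : WW → ℝ, Sm D0 ∧ Sm D1 ∧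
  ∀ w ∈ DomW, a w - b w = (w.2.1.1 + w.2.2.1) * D0 w + (w.2.1.2 + w.2.2.2) * D1 w

theorem Sm.add {f g : WW → ℝ} (hf : Sm f) (hg : Sm g) : Sm (fun w => f w + g w) :=
  fun w hw => (hf w hw).add (hg w hw)
theorem Sm.mul {f g : WW → ℝ} (hf : Sm f) (hg : Sm g) : Sm (fun w => f w * g w) :=
  fun w hw => (hf w hw).mul (hg w hw)
theorem Sm.neg {f : WW → ℝ} (hf : Sm f) : Sm (fun w => - f w) :=
  fun w hw => (hf w hw).neg
theorem Sm.inv {f : WW → ℝ} (hf : Sm f) (h : ∀ w ∈ DomW, f w ≠ 0) : Sm (fun w => (f w)⁻¹) :=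
  fun w hw => (hf w hw).inv (h w hw)
theorem Sm.sqrt {f : WW → ℝ} (hf : Sm f) (h : ∀ w ∈ DomW, 0 < f w) : Sm (fun w => √(f w)) :=
  fun w hw => (hf w hw).sqrt (h w hw).ne'
theorem Sm.of {f : WW → ℝ} (hf : ContDiff ℝ (⊤ : ℕ∞) f) : Sm f := fun _ _ => hf.contDiffAt

theorem DD.const {f : WW → ℝ} (hf : Sm f) : DD f f :=
  ⟨hf, hf, fun _ => 0, fun _ => 0, Sm.of (by fun_prop), Sm.of (by fun_prop), fun w _ => by ring⟩

theorem DD.coord1 : DD (fun w => w.2.1.1) (fun w => - w.2.2.1) :=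
  ⟨Sm.of (by fun_prop), Sm.of (by fun_prop), fun _ => 1, fun _ => 0, Sm.of (by fun_prop),
    Sm.of (by fun_prop), fun w _ => by ring⟩

theorem DD.coord2 : DD (fun w => w.2.1.2) (fun w => - w.2.2.2) :=
  ⟨Sm.of (by fun_prop), Sm.of (by fun_prop), fun _ => 0, fun _ => 1, Sm.of (by fun_prop),
    Sm.of (by fun_prop), fun w _ => by ring⟩

theorem DD.add {a b c d : WW → ℝ} (h : DD a b) (k : DD c d) :
    DD (fun w => a w + c w) (fun w => b w + d w) := by
  obtain ⟨h1, h2, D0, D1, s0, s1, e⟩ := h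
  obtain ⟨k1, k2, E0, E1, t0, t1, f⟩ := k
  refine ⟨h1.add k1, h2.add k2, _, _, s0.add t0, s1.add t1, fun w hw => ?_⟩
  linear_combination e w hw + f w hw

theorem DD.mul {a b c d : WW → ℝ} (h : DD a b) (k : DD c d) :
    DD (fun w => a w * c w) (fun w => b w * d w) := by
  obtain ⟨h1, h2, D0, D1, s0, s1, e⟩ := h
  obtain ⟨k1, k2, E0, E1, t0, t1, f⟩ := k
  refine ⟨h1.mul k1, h2.mul k2, _, _, (k1.mul s0).add (h2.mul t0), (k1.mul s1).add (h2.mul t1),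
    fun w hw => ?_⟩
  linear_combination c w * e w hw + b w * f w hw

theorem DD.neg {a b : WW → ℝ} (h : DD a b) : DD (fun w => - a w) (fun w => - b w) := by
  obtain ⟨h1, h2, D0, D1, s0, s1, e⟩ := h
  refine ⟨h1.neg, h2.neg, _, _, s0.neg, s1.neg, fun w hw => ?_⟩
  linear_combination - e w hw

theorem DD.inv {a b : WW → ℝ} (h : DD a b) (ha : ∀ w ∈ DomW, a w ≠ 0) (hb : ∀ w ∈ DomW, b w ≠ 0) :
    DD (fun w => (a w)⁻¹) (fun w => (b w)⁻¹) := by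
  obtain ⟨h1, h2, D0, D1, s0, s1, e⟩ := h
  have hab := ((h1.inv ha).mul (h2.inv hb)).neg
  refine ⟨h1.inv ha, h2.inv hb, _, _, hab.mul s0, hab.mul s1, fun w hw => ?_⟩
  have := e w hw
  have h3 := ha w hw
  have h4 := hb w hw
  have h5 : (a w)⁻¹ - (b w)⁻¹ = -((a w)⁻¹ * (b w)⁻¹) * (a w - b w) := by field_simp; ring
  rw [h5, this]; ring

theorem DD.sqrt {a b : WW → ℝ} (h : DD a b) (ha : ∀ w ∈ DomW, 0 < a w) (hb : ∀ w ∈ DomW, 0 < b w) :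
    DD (fun w => √(a w)) (fun w => √(b w)) := by
  obtain ⟨h1, h2, D0, D1, s0, s1, e⟩ := h
  have hab := ((h1.sqrt ha).add (h2.sqrt hb)).inv (fun w hw => by
    have := Real.sqrt_pos.2 (ha w hw); have := Real.sqrt_pos.2 (hb w hw); positivity)
  refine ⟨h1.sqrt ha, h2.sqrt hb, _, _, hab.mul s0, hab.mul s1, fun w hw => ?_⟩
  have := e w hw
  have h3 := Real.sqrt_pos.2 (ha w hw)
  have h4 := Real.sqrt_pos.2 (hb w hw)
  have h5 : √(a w) - √(b w) = (√(a w) + √(b w))⁻¹ * (a w - b w) := by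
    have := Real.sq_sqrt (ha w hw).le
    have := Real.sq_sqrt (hb w hw).le
    field_simp
    nlinarith
  rw [h5, this]; ring

def An (θ : ℝ × ℝ × ℝ) (p : ℝ × ℝ) : ℝ :=
  √((θ.1 + θ.2.2 * p.1) * (θ.1 + θ.2.2 * p.1) + (θ.2.1 + θ.2.2 * p.2) * (θ.2.1 + θ.2.2 * p.2))
def Bn (θ : ℝ × ℝ × ℝ) (p : ℝ × ℝ) : ℝ :=
  √((θ.1 + (-θ.2.2) * p.1) * (θ.1 + (-θ.2.2) * p.1)
    + (θ.2.1 + (-θ.2.2) * p.2) * (θ.2.1 + (-θ.2.2) * p.2))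
def Nn (θ : ℝ × ℝ × ℝ) (p : ℝ × ℝ) : ℝ :=
  An θ p * Bn θ p + (1 + (-(θ.2.2 * θ.2.2)) * (p.1 * p.1 + p.2 * p.2))
def ln (θ : ℝ × ℝ × ℝ) (p : ℝ × ℝ) : ℝ := θ.1 * p.1 + θ.2.1 * p.2
def Qn (θ : ℝ × ℝ × ℝ) (p : ℝ × ℝ) : ℝ := (p.1 * p.1 + p.2 * p.2) + -(ln θ p * ln θ p)
def Hs (θ : ℝ × ℝ × ℝ) (p : ℝ × ℝ) : ℝ :=
  (4 * Qn θ p) * (Nn θ p * (An θ p + Bn θ p + 2))⁻¹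
def Gs (θ : ℝ × ℝ × ℝ) (p : ℝ × ℝ) : ℝ :=
  -(2 * ((ln θ p * Hs θ p) * (An θ p + Bn θ p)⁻¹))

theorem arg_pos (l1 l2 e p1 p2 : ℝ) (h : l1 ^ 2 + l2 ^ 2 = 1) (he : e ^ 2 * (p1 ^ 2 + p2 ^ 2) < 1) :
    0 < (l1 + e * p1) * (l1 + e * p1) + (l2 + e * p2) * (l2 + e * p2) := by
  by_contra hcon
  have h1 : l1 + e * p1 = 0 := by nlinarith [sq_nonneg (l1 + e * p1), sq_nonneg (l2 + e * p2)]
  have h2 : l2 + e * p2 = 0 := by nlinarith [sq_nonneg (l1 + e * p1), sq_nonneg (l2 + e * p2)]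
  have h3 : l1 = - (e * p1) := by linarith
  have h4 : l2 = - (e * p2) := by linarith
  subst h3 h4
  nlinarith

theorem small_of {e p1 p2 : ℝ} (he0 : 0 ≤ e) (he : e ≤ 1 / 2) (h1 : |p1| ≤ 5 / 4) (h2 : |p2| ≤ 5 / 4) :
    e ^ 2 * (p1 ^ 2 + p2 ^ 2) < 1 := by
  have h3 : p1 ^ 2 ≤ 25 / 16 := by rw [← sq_abs]; nlinarith [abs_nonneg p1]
  have h4 : p2 ^ 2 ≤ 25 / 16 := by rw [← sq_abs]; nlinarith [abs_nonneg p2]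
  have h5 : e ^ 2 ≤ 1 / 4 := by nlinarith
  nlinarith [sq_nonneg p1, sq_nonneg p2, sq_nonneg e]

def Adm (θ : ℝ × ℝ × ℝ) (p : ℝ × ℝ) : Prop :=
  θ.1 ^ 2 + θ.2.1 ^ 2 = 1 ∧ θ.2.2 ^ 2 * (p.1 ^ 2 + p.2 ^ 2) < 1

theorem Adm.A {θ : ℝ × ℝ × ℝ} {p : ℝ × ℝ} (h : Adm θ p) :
    0 < (θ.1 + θ.2.2 * p.1) * (θ.1 + θ.2.2 * p.1) + (θ.2.1 + θ.2.2 * p.2) * (θ.2.1 + θ.2.2 * p.2) :=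
  arg_pos _ _ _ _ _ h.1 h.2
theorem Adm.B {θ : ℝ × ℝ × ℝ} {p : ℝ × ℝ} (h : Adm θ p) :
    0 < (θ.1 + (-θ.2.2) * p.1) * (θ.1 + (-θ.2.2) * p.1)
    + (θ.2.1 + (-θ.2.2) * p.2) * (θ.2.1 + (-θ.2.2) * p.2) :=
  arg_pos _ _ _ _ _ h.1 (by rw [neg_sq]; exact h.2)
theorem Adm.An {θ : ℝ × ℝ × ℝ} {p : ℝ × ℝ} (h : Adm θ p) : 0 < An θ p := Real.sqrt_pos.2 h.A
theorem Adm.Bn {θ : ℝ × ℝ × ℝ} {p : ℝ × ℝ} (h : Adm θ p) : 0 < Bn θ p := Real.sqrt_pos.2 h.B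
theorem Adm.Nn {θ : ℝ × ℝ × ℝ} {p : ℝ × ℝ} (h : Adm θ p) : 0 < Nn θ p := by
  have := h.An; have := h.Bn; have := h.2
  unfold _root_.Nn
  have : 0 < _root_.An θ p * _root_.Bn θ p := by positivity
  nlinarith

theorem DomW.adm {w : WW} (hw : w ∈ DomW) : Adm w.1 w.2.1 ∧ Adm w.1 (-w.2.2) := by
  obtain ⟨⟨h1, h2, h3⟩, h4⟩ := hw
  obtain ⟨h5, h6⟩ := (norm_prod_le_iff.1 h4)
  obtain ⟨h7, h8⟩ := (norm_prod_le_iff.1 h5)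
  obtain ⟨h9, h10⟩ := (norm_prod_le_iff.1 h6)
  refine ⟨⟨h1, small_of h2 h3 h7 h8⟩, ⟨h1, ?_⟩⟩
  simpa using small_of h2 h3 h9 h10

theorem DD.An : DD (fun w => An w.1 w.2.1) (fun w => An w.1 (-w.2.2)) := by
  have c1 : DD (fun w => w.1.1 + w.1.2.2 * w.2.1.1) (fun w => w.1.1 + w.1.2.2 * (-w.2.2.1)) :=
    (DD.const (Sm.of (by fun_prop))).add ((DD.const (Sm.of (by fun_prop))).mul DD.coord1)
  have c2 : DD (fun w => w.1.2.1 + w.1.2.2 * w.2.1.2) (fun w => w.1.2.1 + w.1.2.2 * (-w.2.2.2)) :=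
    (DD.const (Sm.of (by fun_prop))).add ((DD.const (Sm.of (by fun_prop))).mul DD.coord2)
  exact ((c1.mul c1).add (c2.mul c2)).sqrt (fun w hw => (DomW.adm hw).1.A)
    (fun w hw => (DomW.adm hw).2.A)

theorem DD.Bn : DD (fun w => Bn w.1 w.2.1) (fun w => Bn w.1 (-w.2.2)) := by
  have c1 : DD (fun w => w.1.1 + (-w.1.2.2) * w.2.1.1) (fun w => w.1.1 + (-w.1.2.2) * (-w.2.2.1)) :=
    (DD.const (Sm.of (by fun_prop))).add ((DD.const (Sm.of (by fun_prop))).mul DD.coord1)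
  have c2 : DD (fun w => w.1.2.1 + (-w.1.2.2) * w.2.1.2) (fun w => w.1.2.1 + (-w.1.2.2) * (-w.2.2.2)) :=
    (DD.const (Sm.of (by fun_prop))).add ((DD.const (Sm.of (by fun_prop))).mul DD.coord2)
  exact ((c1.mul c1).add (c2.mul c2)).sqrt (fun w hw => (DomW.adm hw).1.B)
    (fun w hw => (DomW.adm hw).2.B)

theorem DD.nsq : DD (fun w => w.2.1.1 * w.2.1.1 + w.2.1.2 * w.2.1.2)
    (fun w => (-w.2.2).1 * (-w.2.2).1 + (-w.2.2).2 * (-w.2.2).2) :=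
  (DD.coord1.mul DD.coord1).add (DD.coord2.mul DD.coord2)

theorem DD.Nn : DD (fun w => Nn w.1 w.2.1) (fun w => Nn w.1 (-w.2.2)) :=
  (DD.An.mul DD.Bn).add ((DD.const (Sm.of (f := fun _ => 1) (by fun_prop))).add
    ((DD.const (Sm.of (f := fun w => -(w.1.2.2 * w.1.2.2)) (by fun_prop))).mul DD.nsq))

theorem DD.ln : DD (fun w => ln w.1 w.2.1) (fun w => ln w.1 (-w.2.2)) :=
  ((DD.const (Sm.of (f := fun w => w.1.1) (by fun_prop))).mul DD.coord1).add
  ((DD.const (Sm.of (f := fun w => w.1.2.1) (by fun_prop))).mul DD.coord2)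

theorem DD.Qn : DD (fun w => Qn w.1 w.2.1) (fun w => Qn w.1 (-w.2.2)) :=
  DD.nsq.add (DD.ln.mul DD.ln).neg

theorem DD.Hs : DD (fun w => Hs w.1 w.2.1) (fun w => Hs w.1 (-w.2.2)) := by
  refine ((DD.const (Sm.of (f := fun _ => 4) (by fun_prop))).mul DD.Qn).mul
    ((DD.Nn.mul ((DD.An.add DD.Bn).add (DD.const (Sm.of (f := fun _ => 2) (by fun_prop))))).inv ?_ ?_)
  · intro w hw
    have h := (DomW.adm hw).1
    have := h.An; have := h.Bn; have := h.Nn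
    positivity
  · intro w hw
    have h := (DomW.adm hw).2
    have := h.An; have := h.Bn; have := h.Nn
    positivity

theorem DD.Gs : DD (fun w => Gs w.1 w.2.1) (fun w => Gs w.1 (-w.2.2)) := by
  refine ((DD.const (Sm.of (f := fun _ => 2) (by fun_prop))).mul ((DD.ln.mul DD.Hs).mul
    ((DD.An.add DD.Bn).inv ?_ ?_))).neg
  · intro w hw
    have h := (DomW.adm hw).1
    have := h.An; have := h.Bn
    positivity
  · intro w hw
    have h := (DomW.adm hw).2
    have := h.An; have := h.Bn
    positivity

theorem An_neg (θ p) : An θ (-p) = Bn θ p := by simp [An, Bn]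
theorem Bn_neg (θ p) : Bn θ (-p) = An θ p := by simp [An, Bn]
theorem ln_neg (θ p) : ln θ (-p) = - ln θ p := by simp [ln]; ring
theorem Hs_neg (θ p) : Hs θ (-p) = Hs θ p := by
  simp [Hs, Nn, Qn, An_neg, Bn_neg, ln_neg, mul_comm, add_comm]
theorem Gs_neg (θ p) : Gs θ (-p) = - Gs θ p := by
  simp [Gs, Hs_neg, An_neg, Bn_neg, ln_neg, add_comm]

theorem symbols : ∃ F : Fin 6 → WW → ℝ, (∀ i, Sm (F i)) ∧ ∀ w ∈ DomW,
    Gs w.1 w.2.1 + Gs w.1 w.2.2 = 2 * ((w.2.1.1 + w.2.2.1) * F 0 w + (w.2.1.2 + w.2.2.2) * F 1 w) ∧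
    Hs w.1 w.2.1 * w.2.2.1 + Hs w.1 w.2.2 * w.2.1.1
      = 2 * ((w.2.1.1 + w.2.2.1) * F 2 w + (w.2.1.2 + w.2.2.2) * F 3 w) ∧
    Hs w.1 w.2.1 * w.2.2.2 + Hs w.1 w.2.2 * w.2.1.2
      = 2 * ((w.2.1.1 + w.2.2.1) * F 4 w + (w.2.1.2 + w.2.2.2) * F 5 w) := by
  obtain ⟨-, -, D0, D1, s0, s1, e⟩ := DD.Gs
  obtain ⟨-, hH, E0, E1, t0, t1, f⟩ := DD.Hs
  have half : Sm (fun _ => 1 / 2) := Sm.of (by fun_prop)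
  have q1 : Sm (fun w => w.2.2.1) := Sm.of (by fun_prop)
  have q2 : Sm (fun w => w.2.2.2) := Sm.of (by fun_prop)
  refine ⟨![fun w => 1 / 2 * D0 w, fun w => 1 / 2 * D1 w,
    fun w => 1 / 2 * (w.2.2.1 * E0 w + Hs w.1 (-w.2.2)), fun w => 1 / 2 * (w.2.2.1 * E1 w),
    fun w => 1 / 2 * (w.2.2.2 * E0 w), fun w => 1 / 2 * (w.2.2.2 * E1 w + Hs w.1 (-w.2.2))], ?_, ?_⟩
  · intro i
    fin_cases i
    · exact half.mul s0
    · exact half.mul s1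
    · exact half.mul ((q1.mul t0).add hH)
    · exact half.mul (q1.mul t1)
    · exact half.mul (q2.mul t0)
    · exact half.mul ((q2.mul t1).add hH)
  · intro w hw
    have e' := e w hw
    have f' := f w hw
    simp only [Gs_neg, Hs_neg] at e' f'
    refine ⟨?_, ?_, ?_⟩
    · change _ = 2 * (_ * (1 / 2 * D0 w) + _ * (1 / 2 * D1 w))
      linear_combination e'
    · change _ = 2 * (_ * (1 / 2 * (w.2.2.1 * E0 w + Hs w.1 (-w.2.2))) + _ * (1 / 2 * (w.2.2.1 * E1 w)))
      rw [Hs_neg]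
      linear_combination w.2.2.1 * f'
    · change _ = 2 * (_ * (1 / 2 * (w.2.2.2 * E0 w)) + _ * (1 / 2 * (w.2.2.2 * E1 w + Hs w.1 (-w.2.2))))
      rw [Hs_neg]
      linear_combination w.2.2.2 * f'

theorem AB_id {θ : ℝ × ℝ × ℝ} {p : ℝ × ℝ} (h : Adm θ p) :
    (An θ p + Bn θ p) / 2 - 1 = θ.2.2 ^ 2 * Hs θ p ∧
    (An θ p - Bn θ p) / 2 - θ.2.2 * ln θ p = θ.2.2 ^ 3 * Gs θ p := by
  have hA := h.An
  have hB := h.Bn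
  have hN := h.Nn
  have hl := h.1
  have hA2 : An θ p ^ 2 = 1 + 2 * (θ.2.2 * ln θ p) + θ.2.2 ^ 2 * (p.1 ^ 2 + p.2 ^ 2) := by
    rw [An, Real.sq_sqrt h.A.le, ln]; linear_combination hl
  have hB2 : Bn θ p ^ 2 = 1 - 2 * (θ.2.2 * ln θ p) + θ.2.2 ^ 2 * (p.1 ^ 2 + p.2 ^ 2) := by
    rw [Bn, Real.sq_sqrt h.B.le, ln]; linear_combination hl
  have hNe : Nn θ p = An θ p * Bn θ p + (1 - θ.2.2 ^ 2 * (p.1 ^ 2 + p.2 ^ 2)) := by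
    rw [Nn]; ring
  have hQ : Qn θ p = p.1 ^ 2 + p.2 ^ 2 - ln θ p ^ 2 := by rw [Qn]; ring
  have hHs : Hs θ p * (Nn θ p * (An θ p + Bn θ p + 2)) = 4 * Qn θ p := by
    rw [Hs]; field_simp
  have hGs : Gs θ p * (An θ p + Bn θ p) = -2 * (ln θ p * Hs θ p) := by
    rw [Gs]; field_simp
  set A := An θ p
  set B := Bn θ p
  set N := Nn θ p
  set a := ln θ p
  set e := θ.2.2
  set r := p.1 ^ 2 + p.2 ^ 2
  have e1 : (A + B) / 2 - 1 = e ^ 2 * Hs θ p := by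
    have h1 : ((A + B) / 2 - 1) * (N * (A + B + 2)) = e ^ 2 * (4 * Qn θ p) := by
      have h2 : (A + B) ^ 2 - 4 = 2 * (e ^ 2 * r - 1) + 2 * (A * B) := by linear_combination hA2 + hB2
      have h3 : (A * B) ^ 2 = (1 + e ^ 2 * r) ^ 2 - 4 * (e * a) ^ 2 := by
        rw [mul_pow, hA2, hB2]; ring
      rw [hNe, hQ]
      linear_combination (1/2) * (A * B + (1 - e ^ 2 * r)) * h2 + h3
    have hne : N * (A + B + 2) ≠ 0 := by positivity
    apply mul_right_cancel₀ hne
    rw [h1, ← hHs]; ring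
  refine ⟨e1, ?_⟩
  have hne : A + B ≠ 0 := by positivity
  apply mul_right_cancel₀ hne
  have h4 : (A - B) * (A + B) = 4 * (e * a) := by linear_combination hA2 - hB2
  linear_combination (1/2) * h4 - e ^ 3 * hGs - 2 * e * a * e1

theorem oneD (f : ℝ → ℂ) (hf : Continuous f) (hp : ∀ x, f (x + 2 * Real.pi) = f x) (s : Finset ℤ)
    (a : ℤ → ℂ)
    (ha : ∀ n : ℤ, a n = (1 / (2 * Real.pi) : ℂ) *
      ∫ x in Set.Icc (-Real.pi) Real.pi, f x * Complex.exp (-Complex.I * ((n * x : ℝ) : ℂ)))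
    (hs : ∀ n ∉ s, a n = 0) (x : ℝ) :
    f x = ∑ n ∈ s, a n * Complex.exp (Complex.I * ((n * x : ℝ) : ℂ)) := by
  haveI : Fact (0 < 2 * Real.pi) := ⟨by positivity⟩
  have hper : Function.Periodic f (2 * Real.pi) := hp
  have hc : Continuous hper.lift := continuous_coinduced_dom.mpr hf
  let g : C(AddCircle (2 * Real.pi), ℂ) := ⟨hper.lift, hc⟩
  have hpi : (Real.pi : ℂ) ≠ 0 := by exact_mod_cast Real.pi_ne_zero
  have hco : ∀ n, fourierCoeff g n = a n := by
    intro n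
    rw [fourierCoeff_eq_intervalIntegral _ n (-Real.pi), ha n,
      show -Real.pi + 2 * Real.pi = Real.pi by ring,
      intervalIntegral.integral_of_le (by linarith [Real.pi_pos]), ← integral_Icc_eq_integral_Ioc,
      Complex.real_smul]
    push_cast
    congr 1
    apply integral_congr_ae
    refine Eventually.of_forall fun y => ?_
    change fourier (-n) (y : AddCircle (2 * Real.pi)) • f y = _
    rw [fourier_coe_apply, smul_eq_mul, mul_comm]
    congr 2
    push_cast
    field_simp
  have hsum : Summable (fourierCoeff g) := by
    apply summable_of_ne_finset_zero (s := s)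
    intro n hn; rw [hco, hs n hn]
  have h1 := has_pointwise_sum_fourier_series_of_summable hsum (x : AddCircle (2 * Real.pi))
  have h2 : g (x : AddCircle (2 * Real.pi)) = f x := rfl
  rw [h2] at h1
  have h3 := h1.unique (hasSum_sum_of_ne_finset_zero (s := s) (by
    intro n hn; rw [hco, hs n hn, zero_smul]))
  rw [h3]
  refine Finset.sum_congr rfl fun n _ => ?_
  rw [hco, smul_eq_mul, fourier_coe_apply]
  congr 2
  push_cast
  field_simp

theorem twoD (b : ℝ × ℝ → ℂ) (hb : Continuous b) (hp : Periodic2 b) (s : Finset ℤ)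
    (hs : ∀ k : Z2, (k.1 ∉ s ∨ k.2 ∉ s) → fCoeff b k = 0) (x : ℝ × ℝ) :
    b x = ∑ k ∈ s ×ˢ s, fCoeff b k * Complex.exp (Complex.I * (dotZ k x : ℝ)) := by
  let g : ℤ → ℝ → ℂ := fun n y => (1 / (2 * Real.pi) : ℂ) *
    ∫ t in Set.Icc (-Real.pi) Real.pi, b (y, t) * Complex.exp (-Complex.I * ((n * t : ℝ) : ℂ))
  have hgc : ∀ n, Continuous (g n) := by
    intro n
    have h : Continuous fun y : ℝ => ∫ t in (-Real.pi)..Real.pi, b (y, t) * Complex.exp (-Complex.I * ((n * t : ℝ) : ℂ)) := by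
      apply intervalIntegral.continuous_parametric_intervalIntegral_of_continuous'
      simp only [Function.uncurry_def]
      fun_prop
    have e : g n = fun y => (1 / (2 * Real.pi) : ℂ) * ∫ t in (-Real.pi)..Real.pi, b (y, t) * Complex.exp (-Complex.I * ((n * t : ℝ) : ℂ)) := by
      ext y
      rw [intervalIntegral.integral_of_le (by linarith [Real.pi_pos]), ← integral_Icc_eq_integral_Ioc]
    rw [e]; exact continuous_const.mul h
  have hgp : ∀ n y, g n (y + 2 * Real.pi) = g n y := by
    intro n y
    simp only [g]
    congr 2
    ext t
    rw [(hp (y, t)).1]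
  have hco : ∀ m n : ℤ, fCoeff b (m, n) = (1 / (2 * Real.pi) : ℂ) *
      ∫ y in Set.Icc (-Real.pi) Real.pi, g n y * Complex.exp (-Complex.I * ((m * y : ℝ) : ℂ)) := by
    intro m n
    have hQ : Q2 = Set.Icc (-Real.pi) Real.pi ×ˢ Set.Icc (-Real.pi) Real.pi := by
      rw [Q2, Set.Icc_prod_Icc]
    have hInt : IntegrableOn (fun z : ℝ × ℝ => b z * Complex.exp (-Complex.I * (dotZ (m, n) z : ℝ)))
        (Set.Icc (-Real.pi) Real.pi ×ˢ Set.Icc (-Real.pi) Real.pi) (volume.prod volume) := by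
      apply ContinuousOn.integrableOn_compact (isCompact_Icc.prod isCompact_Icc)
      unfold dotZ
      fun_prop
    rw [fCoeff, hQ, Measure.volume_eq_prod, setIntegral_prod _ hInt]
    have e : ∀ y : ℝ, g n y * Complex.exp (-Complex.I * ((m * y : ℝ) : ℂ)) =
        (1 / (2 * Real.pi) : ℂ) * ∫ t in Set.Icc (-Real.pi) Real.pi,
          b (y, t) * Complex.exp (-Complex.I * (dotZ (m, n) (y, t) : ℝ)) := by
      intro y
      simp only [g]
      rw [mul_assoc, ← integral_mul_const]
      congr 2
      ext t
      rw [mul_assoc, ← Complex.exp_add]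
      congr 2
      simp only [dotZ]; push_cast; ring
    simp_rw [e]
    rw [integral_const_mul, ← mul_assoc]
    congr 1
    ring
  have hg : ∀ n y, g n y = ∑ m ∈ s, fCoeff b (m, n) * Complex.exp (Complex.I * ((m * y : ℝ) : ℂ)) := by
    intro n y
    exact oneD (g n) (hgc n) (hgp n) s (fun m => fCoeff b (m, n)) (fun m => hco m n)
      (fun m hm => hs (m, n) (Or.inl hm)) y
  have hb1 := oneD (fun t => b (x.1, t)) (by fun_prop) (fun t => (hp (x.1, t)).2) s
    (fun n => g n x.1) (fun n => rfl) (by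
      intro n hn
      simp only [hg]
      exact Finset.sum_eq_zero fun m _ => by rw [hs (m, n) (Or.inr hn), zero_mul]) x.2
  change b x = _ at hb1
  rw [hb1, Finset.sum_product_right]
  refine Finset.sum_congr rfl fun n _ => ?_
  rw [hg, Finset.sum_mul]
  refine Finset.sum_congr rfl fun m _ => ?_
  rw [mul_assoc, ← Complex.exp_add]
  congr 2
  simp only [dotZ]; push_cast; ring

/-- the exponential with frequency `k` -/
def ee (k : Z2) (x : ℝ × ℝ) : ℂ := Complex.exp (Complex.I * (dotZ k x : ℝ))

theorem ee_add (k j : Z2) (x : ℝ × ℝ) : ee (k + j) x = ee k x * ee j x := by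
  rw [ee, ee, ee, ← Complex.exp_add]; congr 1
  simp only [dotZ, Prod.fst_add, Prod.snd_add]; push_cast; ring

theorem Tmult_fin (m : Z2 → ℂ) (b : ℝ × ℝ → ℂ) (S : Finset Z2) (hS : ∀ k ∉ S, fCoeff b k = 0)
    (x : ℝ × ℝ) : Tmult m b x = ∑ k ∈ S, m k * fCoeff b k * ee k x := by
  rw [Tmult, tsum_eq_sum (s := S)]
  · rfl
  · intro k hk; rw [hS k hk]; simp

theorem Tbil_fin (K : (ℝ × ℝ) × (ℝ × ℝ) → ℂ) (b : ℝ × ℝ → ℂ) (S : Finset Z2)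
    (hS : ∀ k ∉ S, fCoeff b k = 0) (x : ℝ × ℝ) :
    Tbil K b b x = ∑ k ∈ S, ∑ j ∈ S,
      (mOf K (toR k) (toR j) * fCoeff b k * fCoeff b j) * ee (k + j) x := by
  have h1 : ∀ k : Z2, (∑' k' : Z2, mOf K (toR k') (toR (k - k')) * fCoeff b k' * fCoeff b (k - k'))
      * Complex.exp (Complex.I * (dotZ k x : ℝ)) =
      ∑ k' ∈ S, (mOf K (toR k') (toR (k - k')) * fCoeff b k' * fCoeff b (k - k')) * ee k x := by
    intro k
    rw [tsum_eq_sum (s := S), Finset.sum_mul]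
    · rfl
    · intro k' hk'; rw [hS k' hk']; simp
  have h3 : ∀ k' : Z2, HasSum (fun k => (mOf K (toR k') (toR (k - k')) * fCoeff b k' * fCoeff b (k - k')) * ee k x)
      (∑ j ∈ S, (mOf K (toR k') (toR j) * fCoeff b k' * fCoeff b j) * ee (k' + j) x) := by
    intro k'
    rw [← (Equiv.addLeft k').hasSum_iff]
    have : ((fun k => (mOf K (toR k') (toR (k - k')) * fCoeff b k' * fCoeff b (k - k')) * ee k x) ∘ (Equiv.addLeft k'))
      = fun j => (mOf K (toR k') (toR j) * fCoeff b k' * fCoeff b j) * ee (k' + j) x := by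
      ext j; simp
    rw [this]
    apply hasSum_sum_of_ne_finset_zero
    intro j hj; rw [hS j hj]; simp
  rw [Tbil]
  simp_rw [h1]
  exact (hasSum_sum fun k' _ => h3 k').tsum_eq

/-- the coordinate direction -/
def dv (j : Fin 2) : ℝ × ℝ := if j = 0 then ((1 : ℝ), (0 : ℝ)) else ((0 : ℝ), (1 : ℝ))

theorem hasFDerivAt_ee (k : Z2) (x : ℝ × ℝ) : ∃ L : ℝ × ℝ →L[ℝ] ℂ, HasFDerivAt (ee k) L x ∧
    ∀ v, L v = Complex.I * (dotZ k v : ℝ) * ee k x := by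
  let M : ℝ × ℝ →L[ℝ] ℝ := (k.1 : ℝ) • ContinuousLinearMap.fst ℝ ℝ ℝ + (k.2 : ℝ) • ContinuousLinearMap.snd ℝ ℝ ℝ
  have hM : ∀ v, M v = dotZ k v := fun v => by simp [M, dotZ]
  let N : ℝ × ℝ →L[ℝ] ℂ := Complex.I • (Complex.ofRealCLM.comp M)
  have hN : ∀ v, N v = Complex.I * (dotZ k v : ℝ) := fun v => by simp [N, hM]
  have h := (N.hasFDerivAt (x := x)).cexp
  refine ⟨_, h.congr_of_eventuallyEq (Eventually.of_forall fun y => ?_), fun v => ?_⟩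
  · simp [ee, hN]
  · simp only [ContinuousLinearMap.smul_apply, hN, smul_eq_mul, ee]; ring

theorem pd_sum {ι : Type*} (S : Finset ι) (a : ι → ℂ) (κ : ι → Z2) (j : Fin 2) (x : ℝ × ℝ) :
    pd j (fun x => ∑ i ∈ S, a i * ee (κ i) x) x =
      ∑ i ∈ S, a i * (Complex.I * (dotZ (κ i) (dv j) : ℝ) * ee (κ i) x) := by
  choose L hL hL2 using fun k => hasFDerivAt_ee k x
  have h : HasFDerivAt (fun x => ∑ i ∈ S, a i * ee (κ i) x) (∑ i ∈ S, a i • L (κ i)) x := by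
    apply HasFDerivAt.fun_sum
    intro i _
    exact (hL (κ i)).const_mul (a i)
  change fderiv ℝ _ x (dv j) = _
  rw [h.fderiv]
  simp [hL2]

theorem pd_Tbil (K : (ℝ × ℝ) × (ℝ × ℝ) → ℂ) (b : ℝ × ℝ → ℂ) (S : Finset Z2)
    (hS : ∀ k ∉ S, fCoeff b k = 0) (i : Fin 2) (x : ℝ × ℝ) :
    pd i (Tbil K b b) x = ∑ k ∈ S, ∑ j ∈ S, fCoeff b k * fCoeff b j * (ee k x * ee j x) *
      (Complex.I * (dotZ (k + j) (dv i) : ℝ) * mOf K (toR k) (toR j)) := by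
  have h : Tbil K b b = fun x => ∑ q ∈ S ×ˢ S,
      (mOf K (toR q.1) (toR q.2) * fCoeff b q.1 * fCoeff b q.2) * ee (q.1 + q.2) x := by
    ext x; rw [Tbil_fin K b S hS, Finset.sum_product]
  rw [h, pd_sum, Finset.sum_product]
  refine Finset.sum_congr rfl fun k _ => Finset.sum_congr rfl fun j _ => ?_
  rw [ee_add]; ring

theorem sym_sum (S : Finset Z2) (c : Z2 → ℂ) (x : ℝ × ℝ) (σ τ : Z2 → Z2 → ℂ)
    (h : ∀ k j, c k ≠ 0 → c j ≠ 0 → σ k j + σ j k = 2 * τ k j) :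
    ∑ k ∈ S, ∑ j ∈ S, c k * c j * (ee k x * ee j x) * σ k j =
    ∑ k ∈ S, ∑ j ∈ S, c k * c j * (ee k x * ee j x) * τ k j := by
  have h1 : ∑ k ∈ S, ∑ j ∈ S, c k * c j * (ee k x * ee j x) * σ k j =
      ∑ k ∈ S, ∑ j ∈ S, c k * c j * (ee k x * ee j x) * σ j k := by
    rw [Finset.sum_comm]
    refine Finset.sum_congr rfl fun k _ => Finset.sum_congr rfl fun j _ => ?_
    ring
  have h2 : 2 * ∑ k ∈ S, ∑ j ∈ S, c k * c j * (ee k x * ee j x) * σ k j =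
      2 * ∑ k ∈ S, ∑ j ∈ S, c k * c j * (ee k x * ee j x) * τ k j := by
    rw [two_mul]
    nth_rewrite 2 [h1]
    rw [← Finset.sum_add_distrib, Finset.mul_sum]
    refine Finset.sum_congr rfl fun k _ => ?_
    rw [← Finset.sum_add_distrib, Finset.mul_sum]
    refine Finset.sum_congr rfl fun j _ => ?_
    by_cases hk : c k = 0
    · simp [hk]
    by_cases hj : c j = 0
    · simp [hj]
    linear_combination c k * c j * (ee k x * ee j x) * h k j hk hj
  exact mul_left_cancel₀ two_ne_zero h2

theorem sum_mul_form (S : Finset Z2) (c : Z2 → ℂ) (x : ℝ × ℝ) (u v : Z2 → ℂ) :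
    (∑ k ∈ S, u k * c k * ee k x) * (∑ j ∈ S, v j * c j * ee j x) =
    ∑ k ∈ S, ∑ j ∈ S, c k * c j * (ee k x * ee j x) * (u k * v j) := by
  rw [Finset.sum_mul_sum]
  refine Finset.sum_congr rfl fun k _ => Finset.sum_congr rfl fun j _ => ?_
  ring

/-- assembling the two divergence terms -/
theorem div_form (S : Finset Z2) (b : ℝ × ℝ → ℂ) (hS : ∀ k ∉ S, fCoeff b k = 0) (x : ℝ × ℝ)
    (u v : Z2 → ℂ) (r : ℂ) (K0 K1 : (ℝ × ℝ) × (ℝ × ℝ) → ℂ)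
    (h : ∀ k j, fCoeff b k ≠ 0 → fCoeff b j ≠ 0 → u k * v j + u j * v k =
      2 * (r * (Complex.I * ((((k.1 : ℝ) + (j.1 : ℝ) : ℝ) : ℂ) * mOf K0 (toR k) (toR j)
        + (((k.2 : ℝ) + (j.2 : ℝ) : ℝ) : ℂ) * mOf K1 (toR k) (toR j))))) :
    (∑ k ∈ S, u k * fCoeff b k * ee k x) * (∑ j ∈ S, v j * fCoeff b j * ee j x) =
      r * (pd 0 (Tbil K0 b b) x + pd 1 (Tbil K1 b b) x) := by
  rw [sum_mul_form, pd_Tbil K0 b S hS, pd_Tbil K1 b S hS, ← Finset.sum_add_distrib, Finset.mul_sum,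
    sym_sum S _ x _ _ h]
  refine Finset.sum_congr rfl fun k _ => ?_
  rw [← Finset.sum_add_distrib, Finset.mul_sum]
  refine Finset.sum_congr rfl fun j _ => ?_
  simp [dotZ, dv]
  ring

theorem knorm_bound {k : Z2} {μ : ℝ} (h : knorm k ≤ μ) :
    |(k.1 : ℝ)| ≤ μ ∧ |(k.2 : ℝ)| ≤ μ := by
  constructor
  · refine le_trans ?_ h
    rw [knorm]; apply Real.abs_le_sqrt; nlinarith [sq_nonneg (k.2 : ℝ)]
  · refine le_trans ?_ h
    rw [knorm]; apply Real.abs_le_sqrt; nlinarith [sq_nonneg (k.1 : ℝ)]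

theorem toR_bound {k : Z2} {μ : ℝ} (h : knorm k ≤ μ) : ‖toR k‖ ≤ μ := by
  rw [toR, Prod.norm_mk, Real.norm_eq_abs, Real.norm_eq_abs]
  exact max_le (knorm_bound h).1 (knorm_bound h).2

theorem knorm_AB {l : ℝ × ℝ} {lam μ : ℝ} {κ : Z2} (hlam : 0 < lam) (h1 : (κ.1 : ℝ) = lam * l.1)
    (h2 : (κ.2 : ℝ) = lam * l.2) (hμ : 0 < μ) (k : Z2) :
    knorm (κ + k) = lam * An (l.1, l.2, μ / lam) (μ⁻¹ • toR k) ∧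
    knorm (κ - k) = lam * Bn (l.1, l.2, μ / lam) (μ⁻¹ • toR k) := by
  constructor
  · rw [knorm, An, ← Real.sqrt_sq hlam.le, ← Real.sqrt_mul (sq_nonneg _), Real.sqrt_sq hlam.le]
    congr 1
    simp only [Prod.fst_add, Prod.snd_add, toR, Prod.smul_mk, smul_eq_mul]
    push_cast
    rw [h1, h2]; field_simp
  · rw [knorm, Bn, ← Real.sqrt_sq hlam.le, ← Real.sqrt_mul (sq_nonneg _), Real.sqrt_sq hlam.le]
    congr 1
    simp only [Prod.fst_sub, Prod.snd_sub, toR, Prod.smul_mk, smul_eq_mul]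
    push_cast
    rw [h1, h2]; field_simp; ring

theorem symb {l : ℝ × ℝ} {lam μ : ℝ} {κ : Z2} (hlam : 0 < lam) (h1 : (κ.1 : ℝ) = lam * l.1)
    (h2 : (κ.2 : ℝ) = lam * l.2) (hμ : 0 < μ) (k : Z2)
    (h : Adm (l.1, l.2, μ / lam) (μ⁻¹ • toR k)) :
    (knorm (κ + k) + knorm (κ - k)) / 2 - lam
      = μ ^ 2 / lam * Hs (l.1, l.2, μ / lam) (μ⁻¹ • toR k) ∧
    (knorm (κ + k) - knorm (κ - k)) / 2 - (l.1 * (k.1 : ℝ) + l.2 * (k.2 : ℝ))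
      = μ ^ 3 / lam ^ 2 * Gs (l.1, l.2, μ / lam) (μ⁻¹ • toR k) := by
  obtain ⟨e1, e2⟩ := AB_id h
  obtain ⟨a, b⟩ := knorm_AB hlam h1 h2 hμ k
  rw [a, b]
  have e3 : lam * (μ / lam * ln (l.1, l.2, μ / lam) (μ⁻¹ • toR k)) = l.1 * (k.1 : ℝ) + l.2 * (k.2 : ℝ) := by
    simp only [ln, toR, Prod.smul_mk, smul_eq_mul]; field_simp
  have e4 : μ ^ 2 / lam = lam * (μ / lam) ^ 2 := by field_simp
  have e5 : μ ^ 3 / lam ^ 2 = lam * (μ / lam) ^ 3 := by field_simp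
  rw [← e3, e4, e5]
  simp only at e1 e2
  constructor
  · linear_combination lam * e1
  · linear_combination lam * e2
/-- Lemma A.3: for `|l| = 1`, `λl ∈ ℤ²`, `0 < μ ≤ λ/2` and `b₀` real with
Fourier support in `{|k| ≤ μ}`, there are kernels `K₁,…,K₆ ∈ L¹(ℝ²×ℝ²)` with `‖K_i‖₁ ≤ C` and
`b₀ T²_{λl}b₀ = (μ²/λ²) ∑_{i=1,2} ∂_{x_i} T_{m_i}(b₀,b₀)`,
`(T¹_{λl}b₀) ∂_{x₁} b₀ = (μ²/λ) ∑ ∂_{x_i} T_{m_{i+2}}(b₀,b₀)`,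
`(T¹_{λl}b₀) ∂_{x₂} b₀ = (μ²/λ) ∑ ∂_{x_i} T_{m_{i+4}}(b₀,b₀)`. -/
theorem stmt13 : ∃ C : ℝ, ∀ (l : ℝ × ℝ) (lam μ : ℝ) (κ : Z2) (b₀ : ℝ × ℝ → ℂ),
    l.1 ^ 2 + l.2 ^ 2 = 1 → 0 < lam → (κ.1 : ℝ) = lam * l.1 → (κ.2 : ℝ) = lam * l.2 →
    0 < μ → μ ≤ lam / 2 →
    ContDiff ℝ (⊤ : ℕ∞) b₀ → Periodic2 b₀ → RealValued b₀ →
    (∀ k : Z2, μ < knorm k → fCoeff b₀ k = 0) →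
    ∃ K : Fin 6 → ((ℝ × ℝ) × (ℝ × ℝ)) → ℂ,
      (∀ i, Integrable (K i) ∧ (∫ z : (ℝ × ℝ) × (ℝ × ℝ), ‖K i z‖) ≤ C) ∧
      (∀ x, b₀ x * T2op κ l b₀ x
          = ((μ ^ 2 / lam ^ 2 : ℝ) : ℂ)
              * (pd 0 (Tbil (K 0) b₀ b₀) x + pd 1 (Tbil (K 1) b₀ b₀) x)) ∧
      (∀ x, T1op κ lam b₀ x * pd 0 b₀ x
          = ((μ ^ 2 / lam : ℝ) : ℂ)
              * (pd 0 (Tbil (K 2) b₀ b₀) x + pd 1 (Tbil (K 3) b₀ b₀) x)) ∧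
      (∀ x, T1op κ lam b₀ x * pd 1 b₀ x
          = ((μ ^ 2 / lam : ℝ) : ℂ)
              * (pd 0 (Tbil (K 4) b₀ b₀) x + pd 1 (Tbil (K 5) b₀ b₀) x)) := by
  obtain ⟨F, hF, hFid⟩ := symbols
  choose C hC0 hC using fun i =>
    kernel_family PP PP_compact (F i) (fun θ hθ z hz => hF i (θ, z) ⟨hθ, hz⟩)
  refine ⟨∑ i, C i, ?_⟩
  intro l lam μ κ b₀ hl hlam hκ1 hκ2 hμ hμl hsm hper _ hsupp
  have hθ : ((l.1, l.2, μ / lam) : ℝ × ℝ × ℝ) ∈ PP := by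
    refine ⟨hl, by positivity, ?_⟩
    simp only
    rw [div_le_iff₀ hlam]; linarith
  choose K hKi hKn hKm using fun i => hC i _ hθ μ hμ
  have hne : ∀ k, fCoeff b₀ k ≠ 0 → knorm k ≤ μ := fun k hk =>
    not_lt.1 fun h => hk (hsupp k h)
  have hs : ∀ k : Z2, (k.1 ∉ Finset.Icc (-⌈μ⌉) ⌈μ⌉ ∨ k.2 ∉ Finset.Icc (-⌈μ⌉) ⌈μ⌉) →
      fCoeff b₀ k = 0 := by
    intro k hk
    by_contra h0
    obtain ⟨a, b⟩ := knorm_bound (hne k h0)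
    have hc : μ ≤ (⌈μ⌉ : ℝ) := Int.le_ceil μ
    rw [abs_le] at a b
    rcases hk with hk | hk <;> apply hk <;> rw [Finset.mem_Icc] <;> constructor
    · have : ((-⌈μ⌉ : ℤ) : ℝ) ≤ k.1 := by push_cast; linarith
      exact_mod_cast this
    · have : (k.1 : ℝ) ≤ (⌈μ⌉ : ℝ) := by linarith
      exact_mod_cast this
    · have : ((-⌈μ⌉ : ℤ) : ℝ) ≤ k.2 := by push_cast; linarith
      exact_mod_cast this
    · have : (k.2 : ℝ) ≤ (⌈μ⌉ : ℝ) := by linarith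
      exact_mod_cast this
  have hb := twoD b₀ hsm.continuous hper _ hs
  generalize Finset.Icc (-⌈μ⌉) ⌈μ⌉ = s at hs hb
  have hS : ∀ k ∉ s ×ˢ s, fCoeff b₀ k = 0 := by
    intro k hk
    apply hs
    rw [Finset.mem_product] at hk
    tauto
  generalize s ×ˢ s = S at hb hS
  have hb' : b₀ = fun x => ∑ k ∈ S, fCoeff b₀ k * ee k x := funext hb
  have hw : ∀ k j, fCoeff b₀ k ≠ 0 → fCoeff b₀ j ≠ 0 →
      (((l.1, l.2, μ / lam), (μ⁻¹ • toR k, μ⁻¹ • toR j)) : WW) ∈ DomW := by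
    have : ∀ k, fCoeff b₀ k ≠ 0 → ‖μ⁻¹ • toR k‖ ≤ 5 / 4 := by
      intro k hk
      rw [norm_smul, norm_inv, Real.norm_of_nonneg hμ.le]
      have := toR_bound (hne k hk)
      rw [inv_mul_le_iff₀ hμ]; linarith
    intro k j hk hj
    refine ⟨hθ, ?_⟩
    rw [Prod.norm_mk]
    exact max_le (this k hk) (this j hj)
  have hm : ∀ i k j, fCoeff b₀ k ≠ 0 → fCoeff b₀ j ≠ 0 → mOf (K i) (toR k) (toR j) =
      ((F i ((l.1, l.2, μ / lam), (μ⁻¹ • toR k, μ⁻¹ • toR j)) : ℝ) : ℂ) := fun i k j hk hj =>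
    hKm i _ _ (toR_bound (hne k hk)) (toR_bound (hne j hj))
  have hsy := fun k (hk : fCoeff b₀ k ≠ 0) =>
    symb hlam hκ1 hκ2 hμ k (DomW.adm (hw k k hk hk)).1
  have hpd : ∀ i x, pd i b₀ x =
      ∑ k ∈ S, (Complex.I * (dotZ k (dv i) : ℝ)) * fCoeff b₀ k * ee k x := by
    intro i x
    conv_lhs => rw [hb']
    rw [pd_sum S (fCoeff b₀) (fun k => k)]
    exact Finset.sum_congr rfl fun k _ => by ring
  have hb1 : ∀ x, b₀ x = ∑ k ∈ S, 1 * fCoeff b₀ k * ee k x := by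
    intro x; simp only [one_mul]; exact hb x
  refine ⟨K, fun i => ⟨hKi i, (hKn i).trans
    (Finset.single_le_sum (f := C) (fun i _ => hC0 i) (Finset.mem_univ i))⟩, ?_, ?_, ?_⟩
  · intro x
    rw [T2op, Tmult_fin _ b₀ S hS, hb1 x]
    refine div_form S b₀ hS x (fun _ => 1) _ _ _ _ ?_
    intro k j hk hj
    have e := (hFid _ (hw k j hk hj)).1
    rw [hm 0 k j hk hj, hm 1 k j hk hj, (hsy k hk).2, (hsy j hj).2]
    have e' : μ ^ 3 / lam ^ 2 * (Gs (l.1, l.2, μ / lam) (μ⁻¹ • toR k) + Gs (l.1, l.2, μ / lam) (μ⁻¹ • toR j))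
        = 2 * (μ ^ 2 / lam ^ 2 * (((k.1 : ℝ) + (j.1 : ℝ)) * F 0 ((l.1, l.2, μ / lam), (μ⁻¹ • toR k, μ⁻¹ • toR j))
          + ((k.2 : ℝ) + (j.2 : ℝ)) * F 1 ((l.1, l.2, μ / lam), (μ⁻¹ • toR k, μ⁻¹ • toR j)))) := by
      rw [e]
      generalize F 0 _ = f0
      generalize F 1 _ = f1
      simp only [toR, Prod.smul_mk, smul_eq_mul]; field_simp
    have e'' := congrArg (fun t : ℝ => (t : ℂ)) e'
    push_cast at e'' ⊢
    linear_combination Complex.I * e''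
  · intro x
    rw [T1op, Tmult_fin _ b₀ S hS, hpd]
    refine div_form S b₀ hS x _ _ _ _ _ ?_
    intro k j hk hj
    have e := (hFid _ (hw k j hk hj)).2.1
    rw [hm 2 k j hk hj, hm 3 k j hk hj, (hsy k hk).1, (hsy j hj).1]
    have d : ∀ k : Z2, dotZ k (dv 0) = (k.1 : ℝ) := fun k => by simp [dotZ, dv]
    rw [d, d]
    have e' : μ ^ 2 / lam * (Hs (l.1, l.2, μ / lam) (μ⁻¹ • toR k) * (j.1 : ℝ) + Hs (l.1, l.2, μ / lam) (μ⁻¹ • toR j) * (k.1 : ℝ))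
        = 2 * (μ ^ 2 / lam * (((k.1 : ℝ) + (j.1 : ℝ)) * F 2 ((l.1, l.2, μ / lam), (μ⁻¹ • toR k, μ⁻¹ • toR j))
          + ((k.2 : ℝ) + (j.2 : ℝ)) * F 3 ((l.1, l.2, μ / lam), (μ⁻¹ • toR k, μ⁻¹ • toR j)))) := by
      generalize F 2 _ = f0 at e ⊢
      generalize F 3 _ = f1 at e ⊢
      simp only at e
      generalize Hs _ _ = h0 at e ⊢
      generalize Hs _ _ = h1 at e ⊢
      simp only [toR, Prod.smul_mk, smul_eq_mul] at e
      have := congrArg (fun t => μ * t) e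
      field_simp at this ⊢
      linear_combination this
    have e'' := congrArg (fun t : ℝ => (t : ℂ)) e'
    push_cast at e'' ⊢
    linear_combination Complex.I * e''
  · intro x
    rw [T1op, Tmult_fin _ b₀ S hS, hpd]
    refine div_form S b₀ hS x _ _ _ _ _ ?_
    intro k j hk hj
    have e := (hFid _ (hw k j hk hj)).2.2
    rw [hm 4 k j hk hj, hm 5 k j hk hj, (hsy k hk).1, (hsy j hj).1]
    have d : ∀ k : Z2, dotZ k (dv 1) = (k.2 : ℝ) := fun k => by simp [dotZ, dv]
    rw [d, d]
    have e' : μ ^ 2 / lam * (Hs (l.1, l.2, μ / lam) (μ⁻¹ • toR k) * (j.2 : ℝ) + Hs (l.1, l.2, μ / lam) (μ⁻¹ • toR j) * (k.2 : ℝ))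
        = 2 * (μ ^ 2 / lam * (((k.1 : ℝ) + (j.1 : ℝ)) * F 4 ((l.1, l.2, μ / lam), (μ⁻¹ • toR k, μ⁻¹ • toR j))
          + ((k.2 : ℝ) + (j.2 : ℝ)) * F 5 ((l.1, l.2, μ / lam), (μ⁻¹ • toR k, μ⁻¹ • toR j)))) := by
      generalize F 4 _ = f0 at e ⊢
      generalize F 5 _ = f1 at e ⊢
      simp only at e
      generalize Hs _ _ = h0 at e ⊢
      generalize Hs _ _ = h1 at e ⊢
      simp only [toR, Prod.smul_mk, smul_eq_mul] at e
      have := congrArg (fun t => μ * t) e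
      field_simp at this ⊢
      linear_combination this
    have e'' := congrArg (fun t : ℝ => (t : ℂ)) e'
    push_cast at e'' ⊢
    linear_combination Complex.I * e''

end
end

section
/- Let m(k) = k₁/|k| for 0 ≠ k ∈ ℤ². There is a constant C such that for all functions φ̂, θ̂ : ℤ² → ℂ with θ̂(0) = 0 and finite right-hand side: ( ∑_{k ∈ ℤ²} | ∑_{k' ∈ ℤ², k' ≠ 0, k' ≠ k} |k|^{1/2} (m(k) − m(k')) φ̂(k − k') θ̂(k') |² )^{1/2} ≤ C ( ∑_{k ≠ 0} |k|⁶ |φ̂(k)|² )^{1/2} ( ∑_{k ≠ 0} |k|^{−1} |θ̂(k)|² )^{1/2} (with the convention m(0)−m(k') interpreted via m(0)=0 being irrelevant since |k|^{1/2} = 0 at k = 0). -/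
open MeasureTheory Complex Filter
open scoped ENNReal NNReal

noncomputable section

lemma aux_cs {ι : Type*} (f g : ι → ℝ) (hf : ∀ i, 0 ≤ f i) (hg : ∀ i, 0 ≤ g i)
    (hfs : Summable fun i => f i ^ 2) (hgs : Summable fun i => g i ^ 2) :
    (Summable fun i => f i * g i) ∧
      (∑' i, f i * g i) ^ 2 ≤ (∑' i, f i ^ 2) * ∑' i, g i ^ 2 := by
  have h := Real.summable_and_inner_le_Lp_mul_Lq_tsum_of_nonneg (p := 2) (q := 2)
    (f := f) (g := g) Real.HolderConjugate.two_two hf hg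
    (by simpa only [Real.rpow_two] using hfs) (by simpa only [Real.rpow_two] using hgs)
  refine ⟨h.1, ?_⟩
  have h2 := h.2
  simp only [Real.rpow_two, ← Real.sqrt_eq_rpow] at h2
  have h0 : 0 ≤ ∑' i, f i * g i := tsum_nonneg fun i => mul_nonneg (hf i) (hg i)
  calc _ ≤ _ := pow_le_pow_left₀ h0 h2 2
    _ = _ := by
      rw [mul_pow, Real.sq_sqrt (tsum_nonneg fun i => sq_nonneg _),
        Real.sq_sqrt (tsum_nonneg fun i => sq_nonneg _)]

lemma aux_young (a b : Z2 → ℝ) (ha : ∀ i, 0 ≤ a i) (hb : ∀ i, 0 ≤ b i)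
    (has : Summable a) (hbs : Summable fun i => b i ^ 2) :
    (∀ k, Summable fun k' => a (k - k') * b k') ∧
    (Summable fun k => (∑' k', a (k - k') * b k') ^ 2) ∧
    ∑' k, (∑' k', a (k - k') * b k') ^ 2 ≤ (∑' j, a j) ^ 2 * ∑' j, b j ^ 2 := by
  let e : Z2 × Z2 ≃ Z2 × Z2 :=
    { toFun := fun p => (p.1 - p.2, p.2)
      invFun := fun p => (p.1 + p.2, p.2)
      left_inv := fun p => by simp
      right_inv := fun p => by simp }
  have hprod : Summable fun p : Z2 × Z2 => a p.1 * b p.2 ^ 2 :=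
    has.mul_of_nonneg hbs ha (fun i => sq_nonneg _)
  have hG : Summable fun p : Z2 × Z2 => a (p.1 - p.2) * b p.2 ^ 2 :=
    e.summable_iff.mpr hprod
  have hGt : ∑' p : Z2 × Z2, a (p.1 - p.2) * b p.2 ^ 2 = (∑' j, a j) * ∑' j, b j ^ 2 := by
    rw [has.tsum_mul_tsum hbs hprod]
    exact e.tsum_eq (fun p : Z2 × Z2 => a p.1 * b p.2 ^ 2)
  have hak : ∀ k, Summable fun k' => a (k - k') := fun k =>
    (Equiv.subLeft k).summable_iff.mpr has
  have hakt : ∀ k, ∑' k', a (k - k') = ∑' j, a j := fun k =>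
    (Equiv.subLeft k).tsum_eq a
  have key : ∀ k, (Summable fun k' => a (k - k') * b k') ∧
      (∑' k', a (k - k') * b k') ^ 2 ≤ (∑' j, a j) * ∑' k', a (k - k') * b k' ^ 2 := by
    intro k
    have e1 : ∀ k', Real.sqrt (a (k - k')) ^ 2 = a (k - k') := fun k' => Real.sq_sqrt (ha _)
    have e2 : ∀ k', (Real.sqrt (a (k - k')) * b k') ^ 2 = a (k - k') * b k' ^ 2 := fun k' => by
      rw [mul_pow, e1]
    have e3 : ∀ k', Real.sqrt (a (k - k')) * (Real.sqrt (a (k - k')) * b k')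
        = a (k - k') * b k' := fun k' => by
      rw [← mul_assoc, Real.mul_self_sqrt (ha _)]
    have h := aux_cs (fun k' => Real.sqrt (a (k - k'))) (fun k' => Real.sqrt (a (k - k')) * b k')
      (fun _ => Real.sqrt_nonneg _) (fun _ => mul_nonneg (Real.sqrt_nonneg _) (hb _))
      (by simpa only [e1] using hak k) (by simpa only [e2] using hG.prod_factor k)
    simpa only [e1, e2, e3, hakt] using h
  have hS : Summable fun k => (∑' j, a j) * ∑' k', a (k - k') * b k' ^ 2 := hG.prod.mul_left _
  have hS' : Summable fun k => (∑' k', a (k - k') * b k') ^ 2 :=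
    Summable.of_nonneg_of_le (fun k => sq_nonneg _) (fun k => (key k).2) hS
  refine ⟨fun k => (key k).1, hS', ?_⟩
  calc _ ≤ _ := hS'.tsum_le_tsum (fun k => (key k).2) hS
    _ = _ := by
      rw [tsum_mul_left, ← hG.tsum_prod, hGt]; ring

lemma knorm_eq (k : Z2) : knorm k = ‖(⟨k.1, k.2⟩ : ℂ)‖ := by
  rw [Complex.norm_eq_sqrt_sq_add_sq, knorm]

lemma knorm_nonneg (k : Z2) : 0 ≤ knorm k := Real.sqrt_nonneg _

lemma knorm_fst (k : Z2) : |(k.1 : ℝ)| ≤ knorm k := by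
  rw [knorm]; exact Real.abs_le_sqrt (by nlinarith [sq_nonneg (k.2 : ℝ)])

lemma knorm_snd (k : Z2) : |(k.2 : ℝ)| ≤ knorm k := by
  rw [knorm]; exact Real.abs_le_sqrt (by nlinarith [sq_nonneg (k.1 : ℝ)])

lemma knorm_pos (k : Z2) (h : k ≠ 0) : 0 < knorm k := by
  rcases (knorm_nonneg k).lt_or_eq with h1 | h1
  · exact h1
  · exfalso; apply h
    have h2 := knorm_fst k
    have h3 := knorm_snd k
    rw [← h1] at h2 h3
    have h4 := abs_nonpos_iff.mp h2
    have h5 := abs_nonpos_iff.mp h3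
    ext
    · exact_mod_cast h4
    · exact_mod_cast h5

lemma knorm_sub (k l : Z2) : |knorm k - knorm l| ≤ knorm (k - l) := by
  have := abs_norm_sub_norm_le (⟨k.1, k.2⟩ : ℂ) ⟨l.1, l.2⟩
  rw [knorm_eq, knorm_eq, knorm_eq]
  have h2 : (⟨((k - l).1 : ℤ), ((k - l).2 : ℤ)⟩ : ℂ) = (⟨k.1, k.2⟩ : ℂ) - ⟨l.1, l.2⟩ := by
    apply Complex.ext <;> simp
  rw [h2]; exact this

lemma summable_knorm : Summable fun k : Z2 => ((knorm k ^ 2)⁻¹) ^ 2 := by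
  have h := EisensteinSeries.summable_one_div_norm_rpow (k := 4) (by norm_num)
  rw [← (finTwoArrowEquiv _).symm.summable_iff] at h
  refine Summable.of_nonneg_of_le (fun k => sq_nonneg _) (fun k => ?_) h
  by_cases hk : k = 0
  · subst hk
    have : knorm 0 = 0 := by simp [knorm]
    rw [this]; simp only [ne_eq, OfNat.ofNat_ne_zero, not_false_eq_true, zero_pow, inv_zero]
    exact Real.rpow_nonneg (norm_nonneg _) _
  · have hpos : 0 < ‖(finTwoArrowEquiv ℤ).symm k‖ := by
      rw [norm_pos_iff]
      intro h0
      apply hk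
      have h1 := congrFun h0 0
      have h2 := congrFun h0 1
      simp at h1 h2
      ext <;> simp [h1, h2]
    have hle : ‖(finTwoArrowEquiv ℤ).symm k‖ ≤ knorm k := by
      rw [pi_norm_le_iff_of_nonneg (knorm_nonneg k)]
      intro i
      fin_cases i
      · simpa [Int.norm_eq_abs] using knorm_fst k
      · simpa [Int.norm_eq_abs] using knorm_snd k
    show _ ≤ ‖(finTwoArrowEquiv ℤ).symm k‖ ^ (-(4:ℝ))
    rw [Real.rpow_neg hpos.le, inv_pow, ← pow_mul]
    norm_cast
    gcongr

lemma aux_one (x y r s d : ℝ) (hr : 0 < r) (hs : 0 < s) (hy : |y| ≤ s)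
    (hxy : |x - y| ≤ d) (hrs : |r - s| ≤ d) : |x / r - y / s| ≤ 2 * d / r := by
  have h1 : x / r - y / s = ((x - y) + y / s * (s - r)) / r := by field_simp; ring
  rw [h1, abs_div, abs_of_pos hr]
  gcongr
  have h2 : |y / s| ≤ 1 := by rw [abs_div, abs_of_pos hs]; exact (div_le_one hs).2 hy
  have h3 : |y / s * (s - r)| ≤ d := by
    rw [abs_mul, abs_sub_comm]
    calc _ ≤ 1 * |r - s| := by gcongr
      _ ≤ d := by simpa using hrs
  linarith [abs_add_le (x - y) (y / s * (s - r))]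

lemma aux_two (x y r s d : ℝ) (hr : 0 < r) (hs : 0 < s) (hx : |x| ≤ r) (hy : |y| ≤ s)
    (hxy : |x - y| ≤ d) (hrs : |r - s| ≤ d) :
    Real.sqrt r * |x / r - y / s| ≤ 2 * (d * Real.sqrt s⁻¹) := by
  have hd : 0 ≤ d := (abs_nonneg _).trans hxy
  have hr' := Real.sqrt_pos.2 hr
  have hs' := Real.sqrt_pos.2 hs
  rw [Real.sqrt_inv]
  rcases le_total r s with h | h
  · have h1 := aux_one y x s r d hs hr hx (by rwa [abs_sub_comm]) (by rwa [abs_sub_comm])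
    rw [abs_sub_comm] at h1
    calc _ ≤ Real.sqrt s * (2 * d / s) := by gcongr
      _ = Real.sqrt s * (2 * d / (Real.sqrt s * Real.sqrt s)) := by rw [Real.mul_self_sqrt hs.le]
      _ = _ := by field_simp
  · have h1 := aux_one x y r s d hr hs hy hxy hrs
    calc _ ≤ Real.sqrt r * (2 * d / r) := by gcongr
      _ = Real.sqrt r * (2 * d / (Real.sqrt r * Real.sqrt r)) := by rw [Real.mul_self_sqrt hr.le]
      _ = 2 * (d * (Real.sqrt r)⁻¹) := by field_simp
      _ ≤ _ := by gcongr

lemma aux_mult (k k' : Z2) (h : k' ≠ 0) :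
    Real.sqrt (knorm k) * |(k.1 : ℝ) / knorm k - (k'.1 : ℝ) / knorm k'|
      ≤ 2 * (knorm (k - k') * Real.sqrt (knorm k')⁻¹) := by
  by_cases hk : k = 0
  · subst hk
    have : knorm 0 = 0 := by simp [knorm]
    rw [this, Real.sqrt_zero, zero_mul]
    have := knorm_nonneg (0 - k')
    positivity
  · refine aux_two _ _ _ _ _ (knorm_pos k hk) (knorm_pos k' h) (knorm_fst k) (knorm_fst k') ?_
      (knorm_sub k k')
    simpa using knorm_fst (k - k')

/-- estimate \eqref{te_456}: with `m(k) = k₁/|k|`,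
`‖∑_{k'≠0,k} |k|^{1/2}(m(k)−m(k')) φ̂(k−k') θ̂(k')‖_{ℓ²_k}
   ≤ C ‖|k|³ φ̂‖_{ℓ²} ‖|k|^{-1/2} θ̂‖_{ℓ²}`. -/
theorem stmt17 : ∃ C : ℝ, ∀ φh θh : Z2 → ℂ, θh 0 = 0 →
    Summable (fun k : Z2 => knorm k ^ (6 : ℕ) * ‖φh k‖ ^ 2) →
    Summable (fun k : Z2 => (knorm k)⁻¹ * ‖θh k‖ ^ 2) →
    Summable (fun k : Z2 =>
      ‖∑' k' : Z2, if k' ≠ 0 ∧ k' ≠ k then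
          ((Real.sqrt (knorm k) : ℝ) : ℂ)
            * ((((k.1 : ℝ) / knorm k - (k'.1 : ℝ) / knorm k' : ℝ)) : ℂ)
            * φh (k - k') * θh k'
        else 0‖ ^ 2) ∧
    Real.sqrt (∑' k : Z2,
      ‖∑' k' : Z2, if k' ≠ 0 ∧ k' ≠ k then
          ((Real.sqrt (knorm k) : ℝ) : ℂ)
            * ((((k.1 : ℝ) / knorm k - (k'.1 : ℝ) / knorm k' : ℝ)) : ℂ)
            * φh (k - k') * θh k'
        else 0‖ ^ 2)
      ≤ C * Real.sqrt (∑' k : Z2, knorm k ^ (6 : ℕ) * ‖φh k‖ ^ 2)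
          * Real.sqrt (∑' k : Z2, (knorm k)⁻¹ * ‖θh k‖ ^ 2) := by
  refine ⟨2 * Real.sqrt (∑' k : Z2, ((knorm k ^ 2)⁻¹) ^ 2), ?_⟩
  intro φh θh _ hφ hθ
  set S := ∑' k : Z2, ((knorm k ^ 2)⁻¹) ^ 2 with hS
  set a : Z2 → ℝ := fun j => knorm j * ‖φh j‖ with ha
  set b : Z2 → ℝ := fun j => Real.sqrt (knorm j)⁻¹ * ‖θh j‖ with hb
  have ha0 : ∀ j, 0 ≤ a j := fun j => mul_nonneg (knorm_nonneg j) (norm_nonneg _)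
  have hb0 : ∀ j, 0 ≤ b j := fun j => mul_nonneg (Real.sqrt_nonneg _) (norm_nonneg _)
  have hb2 : ∀ j, b j ^ 2 = (knorm j)⁻¹ * ‖θh j‖ ^ 2 := fun j => by
    rw [hb]; simp only
    rw [mul_pow, Real.sq_sqrt (inv_nonneg.2 (knorm_nonneg j))]
  have e1 : ∀ j, (knorm j ^ 3 * ‖φh j‖) ^ 2 = knorm j ^ 6 * ‖φh j‖ ^ 2 := fun j => by ring
  have e2 : ∀ j, (knorm j ^ 2)⁻¹ * (knorm j ^ 3 * ‖φh j‖) = a j := fun j => by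
    rw [ha]; simp only
    rcases (knorm_nonneg j).lt_or_eq with h | h
    · field_simp
    · rw [← h]; simp
  have hcs := aux_cs (fun j => (knorm j ^ 2)⁻¹) (fun j => knorm j ^ 3 * ‖φh j‖)
    (fun j => inv_nonneg.2 (sq_nonneg _))
    (fun j => mul_nonneg (pow_nonneg (knorm_nonneg j) 3) (norm_nonneg _))
    summable_knorm (by simpa only [e1] using hφ)
  simp only [e1, e2, ← hS] at hcs
  obtain ⟨has, haA⟩ := hcs
  obtain ⟨y1, y2, y3⟩ := aux_young a b ha0 hb0 has (by simpa only [hb2] using hθ)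
  simp only [hb2] at y3
  have hS0 : 0 ≤ S := tsum_nonneg fun j => sq_nonneg _
  have hP0 : 0 ≤ ∑' k : Z2, knorm k ^ (6 : ℕ) * ‖φh k‖ ^ 2 :=
    tsum_nonneg fun j => mul_nonneg (pow_nonneg (knorm_nonneg j) 6) (sq_nonneg _)
  have hB0 : 0 ≤ ∑' k : Z2, (knorm k)⁻¹ * ‖θh k‖ ^ 2 :=
    tsum_nonneg fun j => mul_nonneg (inv_nonneg.2 (knorm_nonneg j)) (sq_nonneg _)
  have hpt : ∀ k : Z2, ‖∑' k' : Z2, if k' ≠ 0 ∧ k' ≠ k then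
          ((Real.sqrt (knorm k) : ℝ) : ℂ)
            * ((((k.1 : ℝ) / knorm k - (k'.1 : ℝ) / knorm k' : ℝ)) : ℂ)
            * φh (k - k') * θh k'
        else 0‖ ^ 2 ≤ 4 * (∑' k', a (k - k') * b k') ^ 2 := by
    intro k
    have h1 := tsum_of_norm_bounded (f := fun k' : Z2 => if k' ≠ 0 ∧ k' ≠ k then
          ((Real.sqrt (knorm k) : ℝ) : ℂ)
            * ((((k.1 : ℝ) / knorm k - (k'.1 : ℝ) / knorm k' : ℝ)) : ℂ)
            * φh (k - k') * θh k'
        else 0) ((y1 k).mul_left 2).hasSum (by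
      intro k'
      have hnn := mul_nonneg (ha0 (k - k')) (hb0 k')
      split_ifs with h
      · rw [norm_mul, norm_mul, norm_mul, Complex.norm_real, Complex.norm_real,
          Real.norm_eq_abs, Real.norm_eq_abs, abs_of_nonneg (Real.sqrt_nonneg _)]
        calc _ ≤ 2 * (knorm (k - k') * Real.sqrt (knorm k')⁻¹) * ‖φh (k - k')‖ * ‖θh k'‖ := by
              exact mul_le_mul_of_nonneg_right (mul_le_mul_of_nonneg_right
                (aux_mult k k' h.1) (norm_nonneg _)) (norm_nonneg _)
          _ = _ := by rw [ha, hb]; ring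
      · rw [norm_zero]; positivity)
    rw [tsum_mul_left] at h1
    calc _ ≤ _ := pow_le_pow_left₀ (norm_nonneg _) h1 2
      _ = _ := by ring
  have hsum := Summable.of_nonneg_of_le (fun k => sq_nonneg _) hpt (y2.mul_left 4)
  refine ⟨hsum, ?_⟩
  have htot := hsum.tsum_le_tsum hpt (y2.mul_left 4)
  rw [tsum_mul_left] at htot
  refine Real.sqrt_le_iff.2 ⟨by positivity, htot.trans ?_⟩
  rw [mul_pow, mul_pow, mul_pow, Real.sq_sqrt hS0, Real.sq_sqrt hP0, Real.sq_sqrt hB0]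
  have := mul_le_mul_of_nonneg_right haA hB0
  nlinarith

end
end
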